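/- arXiv:2311.11663 — 3 statements merged into one kernel-verified Lean document; each statement's English description precedes it below -/
import Mathlib

section
/- There exist constants c₁ > 0, c₂ > 0 and c₃ > 0 such that the following holds. Let (Con, Red) be a black-box HF⇒(1/2+ε)-HF proof with parameters (ℓ, ℓ', a) whose reduction makes q queries. If 0 < ε ≤ 1/10, ℓ' ≥ log₂(1/ε²) + c₃, and a ≤ 2^ℓ/10, then q ≥ max(c₁·(1/ε), c₂·(ℓ − log₂(2a))). -/
open scoped BigOperators

attribute [local instance] Classical.propDecidable

noncomputable section

/-- Probability that a uniformly random element of a finite type satisfies `P`. -/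
def uPr {X : Type*} [Fintype X] (P : X → Prop) : ℝ :=
  (Fintype.card {x : X // P x} : ℝ) / (Fintype.card X : ℝ)

/-- Probability of `P` under `t` i.i.d. bits, each equal to `true` with probability `p`. -/
def bPr {t : ℕ} (p : ℝ) (P : (Fin t → Bool) → Prop) : ℝ :=
  ∑ x : Fin t → Bool, if P x then (∏ i, if x i then p else 1 - p) else 0

/-- An adaptive `q`-query oracle procedure with input set `I` and query set `Q`. -/
structure OracleProc (q : ℕ) (I : Type*) (Q : Type*) where
  qry : (i : Fin q) → I → (Fin i.val → Bool) → Q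
  out : I → (Fin q → Bool) → Bool

/-- The answer to the `i`-th query when running with oracle `D` on input `w`. -/
def OracleProc.ans {q : ℕ} {I Q : Type*} (P : OracleProc q I Q) (D : Q → Bool) (w : I)
    (i : Fin q) : Bool :=
  D (P.qry i w (fun j => P.ans D w ⟨j.val, j.isLt.trans i.isLt⟩))
termination_by i.val
decreasing_by exact j.isLt

/-- The output of the oracle procedure, with oracle `D`, on input `w`. -/
def OracleProc.run {q : ℕ} {I Q : Type*} (P : OracleProc q I Q) (D : Q → Bool) (w : I) : Bool :=
  P.out w (P.ans D w)

/-- A clause over `n` Boolean variables: a list of literals (variable, polarity). -/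
abbrev BClause (n : ℕ) := List (Fin n × Bool)

/-- A CNF over `n` Boolean variables: a list of clauses. -/
abbrev BCNF (n : ℕ) := List (BClause n)

def BClause.eval {n : ℕ} (c : BClause n) (x : Fin n → Bool) : Bool :=
  c.any (fun l => x l.1 == l.2)

def BCNF.eval {n : ℕ} (φ : BCNF n) (x : Fin n → Bool) : Bool :=
  φ.all (fun c => BClause.eval c x)

/-- A `q`-CNF: every clause has at most `q` literals. -/
def BCNF.width {n : ℕ} (φ : BCNF n) (q : ℕ) : Prop :=
  ∀ c ∈ φ, c.length ≤ q

/-- Hamming weight. -/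
def wt {n : ℕ} (x : Fin n → Bool) : ℕ :=
  (Finset.univ.filter (fun i => x i = true)).card

/-- The set of free (`*`) positions of a restriction. -/
def freeSet {n : ℕ} (ρ : Fin n → Option Bool) : Finset (Fin n) :=
  Finset.univ.filter (fun i => ρ i = none)

/-- The number of free positions of a restriction. -/
def freeCount {n : ℕ} (ρ : Fin n → Option Bool) : ℕ := (freeSet ρ).card

/-- Fill the free positions of a restriction `ρ` with the bits of `x`, in order. -/
def Fill {n t : ℕ} (ρ : Fin n → Option Bool) (h : freeCount ρ = t)
    (x : Fin t → Bool) : Fin n → Bool := fun i =>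
  if hm : i ∈ freeSet ρ then x (((freeSet ρ).orderIsoOfFin h).symm ⟨i, hm⟩)
  else (ρ i).getD false

/-- The restrictions on `n` variables with exactly `t` free positions. -/
abbrev Restr (n t : ℕ) := {ρ : Fin n → Option Bool // freeCount ρ = t}

/-- Relative Hamming distance. -/
def relDist {n : ℕ} (x y : Fin n → Bool) : ℝ :=
  ((Finset.univ.filter (fun i => x i ≠ y i)).card : ℝ) / n

end

/-!
Let `D` be a noisy copy of `Con f`, each bit of which is correct with probability `1/2 + 2ε`. By
Chernoff's bound it is mostly close enough to `Con f` for the reduction to apply, so for some advice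
the event that `Red` computes `f` from `D` has probability at least `(7/8)/|A|`, with `A` the set of
advice strings. On the other hand each oracle and advice string determine one of the `2^|X|`
functions `f : X → Bool`, so under a uniformly random oracle the probabilities of these events,
summed over the advice, have average only `|A|/2^|X|` over `f`. Each event is an intersection of
`|X|` decision trees of depth `q`, and two transfers from the noisy to the uniform law exploit this.

* The density of the noisy law grows by at most a factor `1 + 4ε` per query, which costs
  `(1 + 4ε)^(q|X|)` in total and forces `q ≥ Ω(1/ε)`.
* As long as one of the trees can still fail, its failing path has noisy probability at least
  `4^(-q)`, so fixing at most `q` bits off that path multiplies the success probability by at least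
  `1/(1 - 4^(-q))`. This can happen only about `4^q log |A|` times before all trees succeed with
  certainty, and fixing these bits costs the uniform law only `q 4^q log |A|` factors `1/2`. Hence
  `|X| ≤ 2^(O(q)) log |A|`.
-/

section OracleProc

variable {q : ℕ} {I Q : Type*}

/-- The procedure that continues `P` after its first query has been answered by `b`. -/
def OracleProc.afterFirst (P : OracleProc (q + 1) I Q) (b : Bool) : OracleProc q I Q where
  qry i w a := P.qry i.succ w (Fin.cons b a : Fin (i.val + 1) → Bool)
  out w a := P.out w (Fin.cons b a)

lemma OracleProc.ans_zero (P : OracleProc (q + 1) I Q) (D : Q → Bool) (w : I) :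
    P.ans D w 0 = D (P.qry 0 w Fin.elim0) := by
  rw [OracleProc.ans]
  exact congrArg (fun a => D (P.qry 0 w a)) (funext fun j => j.elim0)

lemma OracleProc.ans_afterFirst (P : OracleProc (q + 1) I Q) (D : Q → Bool) (w : I) (i : Fin q) :
    (P.afterFirst (P.ans D w 0)).ans D w i = P.ans D w i.succ := by
  induction i using WellFoundedLT.induction with
  | ind i ih =>
    rw [OracleProc.ans, OracleProc.ans.eq_def P D w i.succ]
    refine congrArg (fun a => D (P.qry i.succ w a)) (funext fun j : Fin (i.val + 1) => ?_)
    cases j using Fin.cases with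
    | zero => rfl
    | succ j => exact ih ⟨j.val, j.isLt.trans i.isLt⟩ j.isLt

lemma OracleProc.run_afterFirst (P : OracleProc (q + 1) I Q) (D : Q → Bool) (w : I) :
    (P.afterFirst (P.ans D w 0)).run D w = P.run D w := by
  have hans : P.ans D w = Fin.cons (P.ans D w 0) ((P.afterFirst (P.ans D w 0)).ans D w) := by
    funext j
    cases j using Fin.cases with
    | zero => rfl
    | succ j => exact (P.ans_afterFirst D w j).symm
  rw [OracleProc.run, OracleProc.run, hans]
  rfl

end OracleProc

namespace HardnessAmplification

section ProductLaw

variable {Q σ : Type*} [Fintype Q]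

/-- The mass of the point `D` under the product over `i : Q` of the laws `w i` on `σ`. The laws are
plain functions `σ → ℝ`; that they are probability laws is expressed by `w i ∈ stdSimplex ℝ σ`. -/
noncomputable def mass (w : Q → σ → ℝ) (D : Q → σ) : ℝ :=
  ∏ i, w i (D i)

/-- The product law `w` conditioned on the event that coordinate `i` equals `b`. -/
noncomputable def condition (w : Q → σ → ℝ) (i : Q) (b : σ) : Q → σ → ℝ :=
  Function.update w i (Pi.single b 1)

omit [Fintype Q] in
lemma forall_condition {R : (σ → ℝ) → Prop} {w : Q → σ → ℝ} (hw : ∀ j, R (w j)) (i : Q) {b : σ}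
    (hb : R (Pi.single b 1)) (j : Q) : R (condition w i b j) :=
  (Function.forall_update_iff w fun _ μ => R μ).2 ⟨hb, fun j _ => hw j⟩ j

omit [Fintype Q] in
lemma forall₂_condition {R : (σ → ℝ) → (σ → ℝ) → Prop} {w u : Q → σ → ℝ}
    (h : ∀ j, R (w j) (u j)) (i : Q) {b : σ} (hb : R (Pi.single b 1) (Pi.single b 1)) (j : Q) :
    R (condition w i b j) (condition u i b j) := by
  rcases eq_or_ne j i with rfl | hj
  · simpa [condition] using hb
  · simpa [condition, hj] using h j

lemma mass_condition (w : Q → σ → ℝ) (i : Q) (b : σ) (D : Q → σ) :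
    mass (condition w i b) D = if D i = b then ∏ j ∈ Finset.univ.erase i, w j (D j) else 0 := by
  have hrest : ∏ j ∈ Finset.univ.erase i, condition w i b j (D j) =
      ∏ j ∈ Finset.univ.erase i, w j (D j) :=
    Finset.prod_congr rfl fun j hj => by
      rw [condition, Function.update_of_ne (Finset.ne_of_mem_erase hj)]
  rw [mass, ← Finset.mul_prod_erase _ _ (Finset.mem_univ i), hrest]
  simp [condition, Pi.single_apply]

lemma eq_of_mass_condition_ne_zero {w : Q → σ → ℝ} {i : Q} {b : σ} {D : Q → σ}
    (hD : mass (condition w i b) D ≠ 0) : D i = b := by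
  by_contra hne
  simp [mass_condition, hne] at hD

lemma mass_condition_ne_zero_iff {w : Q → σ → ℝ} {i : Q} {D : Q → σ} (hi : w i (D i) ≠ 0) :
    mass (condition w i (D i)) D ≠ 0 ↔ mass w D ≠ 0 := by
  rw [mass_condition, if_pos rfl, mass, ← Finset.mul_prod_erase _ _ (Finset.mem_univ i)]
  simp [hi]

lemma mass_nonneg [Fintype σ] {w : Q → σ → ℝ} (hw : ∀ i, w i ∈ stdSimplex ℝ σ) (D : Q → σ) :
    0 ≤ mass w D :=
  Finset.prod_nonneg fun i _ => (hw i).1 _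

variable [Fintype σ]

/-- The probability of the event `G` under the product law `w`. -/
noncomputable def prob (w : Q → σ → ℝ) (G : Set (Q → σ)) : ℝ :=
  ∑ D, G.indicator (mass w) D

@[simp]
lemma prob_empty (w : Q → σ → ℝ) : prob w ∅ = 0 := by
  simp [prob]

lemma prob_univ {w : Q → σ → ℝ} (hw : ∀ i, w i ∈ stdSimplex ℝ σ) : prob w Set.univ = 1 := by
  have h := Finset.prod_univ_sum (fun _ : Q => (Finset.univ : Finset σ)) w
  simp only [Fintype.piFinset_univ, (hw _).2, Finset.prod_const_one] at h
  simpa [prob, mass] using h.symm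

lemma prob_nonneg {w : Q → σ → ℝ} (hw : ∀ i, w i ∈ stdSimplex ℝ σ) (G : Set (Q → σ)) :
    0 ≤ prob w G :=
  Finset.sum_nonneg fun _ _ => Set.indicator_nonneg (fun D _ => mass_nonneg hw D) _

lemma prob_mono {w : Q → σ → ℝ} (hw : ∀ i, w i ∈ stdSimplex ℝ σ) {G H : Set (Q → σ)}
    (hGH : G ⊆ H) : prob w G ≤ prob w H :=
  Finset.sum_le_sum fun D _ => Set.indicator_le_indicator_of_subset hGH (mass_nonneg hw) D

lemma prob_le_one {w : Q → σ → ℝ} (hw : ∀ i, w i ∈ stdSimplex ℝ σ) (G : Set (Q → σ)) :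
    prob w G ≤ 1 :=
  (prob_mono hw G.subset_univ).trans_eq (prob_univ hw)

lemma prob_add_prob_compl {w : Q → σ → ℝ} (hw : ∀ i, w i ∈ stdSimplex ℝ σ) (G : Set (Q → σ)) :
    prob w G + prob w Gᶜ = 1 := by
  rw [← prob_univ hw, prob, prob, ← Finset.sum_add_distrib]
  simp only [Set.indicator_self_add_compl_apply, Set.indicator_univ, prob]

lemma prob_iUnion_le {ι : Type*} [Fintype ι] {w : Q → σ → ℝ} (hw : ∀ i, w i ∈ stdSimplex ℝ σ)
    (G : ι → Set (Q → σ)) : prob w (⋃ a, G a) ≤ ∑ a, prob w (G a) := by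
  simp only [prob]
  rw [Finset.sum_comm]
  refine Finset.sum_le_sum fun D _ => ?_
  have hnonneg : ∀ a, 0 ≤ (G a).indicator (mass w) D :=
    fun a => Set.indicator_nonneg (fun D _ => mass_nonneg hw D) D
  by_cases hD : D ∈ ⋃ a, G a
  · obtain ⟨a, ha⟩ := Set.mem_iUnion.1 hD
    calc (⋃ a, G a).indicator (mass w) D = (G a).indicator (mass w) D := by
          rw [Set.indicator_of_mem hD, Set.indicator_of_mem ha]
      _ ≤ ∑ a, (G a).indicator (mass w) D :=
          Finset.single_le_sum (fun a _ => hnonneg a) (Finset.mem_univ a)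
  · rw [Set.indicator_of_notMem hD]
    exact Finset.sum_nonneg fun a _ => hnonneg a

lemma sum_prob_preimage_singleton {β : Type*} [Fintype β] {w : Q → σ → ℝ}
    (hw : ∀ i, w i ∈ stdSimplex ℝ σ) (F : (Q → σ) → β) : ∑ y, prob w (F ⁻¹' {y}) = 1 := by
  simp only [prob]
  rw [Finset.sum_comm, ← prob_univ hw]
  simp [prob, Set.indicator_apply]

lemma prob_congr {w : Q → σ → ℝ} {G H : Set (Q → σ)}
    (h : ∀ D, mass w D ≠ 0 → (D ∈ G ↔ D ∈ H)) : prob w G = prob w H := by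
  refine Finset.sum_congr rfl fun D _ => ?_
  by_cases hD : mass w D = 0
  · simp [Set.indicator_apply, hD]
  · simp [Set.indicator_apply, h D hD]

lemma prob_eq_sum_condition (w : Q → σ → ℝ) (i : Q) (G : Set (Q → σ)) :
    prob w G = ∑ b, w i b * prob (condition w i b) G := by
  have hmass : ∀ D, mass w D = ∑ b, w i b * mass (condition w i b) D := fun D => by
    rw [mass, ← Finset.mul_prod_erase _ _ (Finset.mem_univ i)]
    simp [mass_condition]
  simp only [prob, Finset.mul_sum]
  rw [Finset.sum_comm]
  refine Finset.sum_congr rfl fun D _ => ?_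
  by_cases hD : D ∈ G <;> simp [hD, hmass]

lemma mul_prob_condition_le {w : Q → σ → ℝ} (hw : ∀ i, w i ∈ stdSimplex ℝ σ) (i : Q) (b : σ)
    (G : Set (Q → σ)) : w i b * prob (condition w i b) G ≤ prob w G := by
  rw [prob_eq_sum_condition w i]
  have hcond (c : σ) := forall_condition hw i (single_mem_stdSimplex ℝ c)
  exact Finset.single_le_sum (f := fun c => w i c * prob (condition w i c) G)
    (fun c _ => mul_nonneg ((hw i).1 c) (prob_nonneg (hcond c) G)) (Finset.mem_univ b)

lemma prob_le_prod_sum_mul {w : Q → σ → ℝ} (hw : ∀ i, w i ∈ stdSimplex ℝ σ) {φ : Q → σ → ℝ}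
    (hφ : ∀ i b, 0 ≤ φ i b) {G : Set (Q → σ)} (hG : ∀ D ∈ G, 1 ≤ ∏ i, φ i (D i)) :
    prob w G ≤ ∏ i, ∑ b, w i b * φ i b := by
  rw [Finset.prod_univ_sum, Fintype.piFinset_univ]
  refine Finset.sum_le_sum fun D _ => Set.indicator_apply_le' (fun hD => ?_) fun _ => ?_
  · rw [Finset.prod_mul_distrib]
    exact le_mul_of_one_le_right (mass_nonneg hw D) (hG D hD)
  · exact Finset.prod_nonneg fun i _ => mul_nonneg ((hw i).1 _) (hφ i _)

end ProductLaw

section DecisionTree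

variable {Q σ : Type*}

/-- The event `S` is decided by a decision tree of depth `n`, which queries coordinates of a point
of `Q → σ` adaptively and whose leaves say whether the point lies in `S`. All leaves have depth
exactly `n`; repeated queries are allowed. -/
inductive HasDecisionTree : ℕ → Set (Q → σ) → Prop
  | empty : HasDecisionTree 0 ∅
  | univ : HasDecisionTree 0 Set.univ
  | query {n : ℕ} (i : Q) (S : σ → Set (Q → σ)) (h : ∀ b, HasDecisionTree n (S b)) :
      HasDecisionTree (n + 1) {D | D ∈ S (D i)}

lemma hasDecisionTree_run {I : Type*} {q : ℕ} (P : OracleProc q I Q) (w : I) (b : Bool) :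
    HasDecisionTree q {D : Q → Bool | P.run D w = b} := by
  induction q with
  | zero =>
    have hrun : ∀ D, P.run D w = P.out w Fin.elim0 :=
      fun D => congrArg (P.out w) (Subsingleton.elim _ _)
    by_cases hb : P.out w Fin.elim0 = b
    · simpa [hrun, hb] using HasDecisionTree.univ
    · simpa [hrun, hb] using HasDecisionTree.empty
  | succ q ih =>
    have hquery : {D : Q → Bool | P.run D w = b} =
        {D | D ∈ {D' | (P.afterFirst (D (P.qry 0 w Fin.elim0))).run D' w = b}} := by
      ext D
      rw [Set.mem_ofPred_eq, ← P.run_afterFirst D w, P.ans_zero]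
      rfl
    rw [hquery]
    exact HasDecisionTree.query (P.qry 0 w Fin.elim0)
      (fun c => {D' | (P.afterFirst c).run D' w = b}) fun c => ih (P.afterFirst c)

variable [Fintype Q] [Fintype σ]

lemma prob_condition_query (w : Q → σ → ℝ) (i : Q) (b : σ) (S : σ → Set (Q → σ))
    (G : Set (Q → σ)) :
    prob (condition w i b) ({D | D ∈ S (D i)} ∩ G) = prob (condition w i b) (S b ∩ G) :=
  prob_congr fun D hD => by simp [eq_of_mass_condition_ne_zero hD]

/-- The probability law `μ` on `σ` is pointwise at most `r` times the probability law `ν`. -/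
structure Dominated (r : ℝ) (μ ν : σ → ℝ) : Prop where
  left_mem : μ ∈ stdSimplex ℝ σ
  right_mem : ν ∈ stdSimplex ℝ σ
  le : ∀ b, μ b ≤ r * ν b

lemma Dominated.single {r : ℝ} (hr : 1 ≤ r) (b : σ) :
    Dominated r (Pi.single b 1) (Pi.single b 1) where
  left_mem := single_mem_stdSimplex ℝ b
  right_mem := single_mem_stdSimplex ℝ b
  le c := le_mul_of_one_le_left ((single_mem_stdSimplex ℝ b).1 c) hr

lemma HasDecisionTree.prob_inter_le {r C : ℝ} (hr : 1 ≤ r) {G : Set (Q → σ)}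
    (hG : ∀ w u : Q → σ → ℝ, (∀ i, Dominated r (w i) (u i)) → prob w G ≤ C * prob u G)
    {n : ℕ} {S : Set (Q → σ)} (hS : HasDecisionTree n S) {w u : Q → σ → ℝ}
    (h : ∀ i, Dominated r (w i) (u i)) : prob w (S ∩ G) ≤ r ^ n * C * prob u (S ∩ G) := by
  induction hS generalizing w u with
  | empty => simp
  | univ => simpa using hG w u h
  | @query n i S _ ih =>
    rw [prob_eq_sum_condition w i, prob_eq_sum_condition u i, Finset.mul_sum]
    refine Finset.sum_le_sum fun b _ => ?_
    have hb := forall₂_condition h i (Dominated.single hr b)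
    simp only [prob_condition_query]
    calc w i b * prob (condition w i b) (S b ∩ G)
        ≤ (r * u i b) * (r ^ n * C * prob (condition u i b) (S b ∩ G)) :=
          mul_le_mul ((h i).le b) (ih b hb) (prob_nonneg (fun j => (hb j).left_mem) _)
            (mul_nonneg (zero_le_one.trans hr) ((h i).right_mem.1 b))
      _ = r ^ (n + 1) * C * (u i b * prob (condition u i b) (S b ∩ G)) := by ring

lemma prob_biInter_le_pow_mul {ι : Type*} {r : ℝ} (hr : 1 ≤ r) {n : ℕ} {S : ι → Set (Q → σ)}
    (hS : ∀ x, HasDecisionTree n (S x)) (s : Finset ι) {w u : Q → σ → ℝ}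
    (h : ∀ i, Dominated r (w i) (u i)) :
    prob w (⋂ x ∈ s, S x) ≤ r ^ (n * s.card) * prob u (⋂ x ∈ s, S x) := by
  induction s using Finset.induction_on generalizing w u with
  | empty => simp [prob_univ fun i => (h i).left_mem, prob_univ fun i => (h i).right_mem]
  | insert x s hx ih =>
    rw [Finset.set_biInter_insert, Finset.card_insert_of_notMem hx, mul_add_one, add_comm, pow_add]
    exact (hS x).prob_inter_le hr (fun w u h => ih h) h

/-- The support of the probability law `μ` on `σ` contains that of the probability law `ν`, and on
it `μ` is at least `α` and `ν` is at least `β`. -/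
structure AtomsBounded (α β : ℝ) (μ ν : σ → ℝ) : Prop where
  left_mem : μ ∈ stdSimplex ℝ σ
  right_mem : ν ∈ stdSimplex ℝ σ
  le_left : ∀ b, μ b ≠ 0 → α ≤ μ b
  le_right : ∀ b, μ b ≠ 0 → β ≤ ν b
  left_ne_zero : ∀ b, ν b ≠ 0 → μ b ≠ 0

lemma AtomsBounded.single {α β : ℝ} (hα : α ≤ 1) (hβ : β ≤ 1) (b : σ) :
    AtomsBounded α β (Pi.single b 1) (Pi.single b 1) where
  left_mem := single_mem_stdSimplex ℝ b
  right_mem := single_mem_stdSimplex ℝ b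
  le_left c hc := by
    obtain rfl : c = b := of_not_not fun hne => hc (Pi.single_eq_of_ne hne 1)
    simpa using hα
  le_right c hc := by
    obtain rfl : c = b := of_not_not fun hne => hc (Pi.single_eq_of_ne hne 1)
    simpa using hβ
  left_ne_zero _ := id

lemma AtomsBounded.mul_prob_condition_le {α β : ℝ} {w u : Q → σ → ℝ}
    (h : ∀ i, AtomsBounded α β (w i) (u i)) {i : Q} {b : σ} (hb : w i b ≠ 0) (G : Set (Q → σ)) :
    β * prob (condition u i b) G ≤ prob u G := by
  have hu : ∀ j, u j ∈ stdSimplex ℝ σ := fun j => (h j).right_mem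
  refine le_trans ?_ (HardnessAmplification.mul_prob_condition_le hu i b G)
  exact mul_le_mul_of_nonneg_right ((h i).le_right b hb)
    (prob_nonneg (forall_condition hu i (single_mem_stdSimplex ℝ b)) G)

omit [Fintype Q] in
lemma exists_lt_of_lt_sum_mul {μ x : σ → ℝ} (hμ : μ ∈ stdSimplex ℝ σ) {b : σ} {δ B : ℝ}
    (hb : x b ≤ (1 - δ) * B) (hlt : (1 - μ b * δ) * B < ∑ c, μ c * x c) :
    ∃ c, μ c ≠ 0 ∧ B < x c := by
  by_contra! hle
  have hterm : ∀ c, μ c * x c ≤ μ c * B - if c = b then μ b * δ * B else 0 := by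
    intro c
    rcases eq_or_ne c b with rfl | hcb
    · rw [if_pos rfl]
      linarith [mul_le_mul_of_nonneg_left hb (hμ.1 c)]
    · rw [if_neg hcb, sub_zero]
      rcases eq_or_ne (μ c) 0 with hc | hc
      · simp [hc]
      · exact mul_le_mul_of_nonneg_left (hle c hc) (hμ.1 c)
  have hsum : ∑ c, μ c * x c ≤ (1 - μ b * δ) * B :=
    calc ∑ c, μ c * x c ≤ ∑ c, (μ c * B - if c = b then μ b * δ * B else 0) :=
          Finset.sum_le_sum fun c _ => hterm c
      _ = (1 - μ b * δ) * B := by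
          simp only [Finset.sum_sub_distrib, ← Finset.sum_mul, hμ.2, Finset.sum_ite_eq',
            Finset.mem_univ, if_true]
          ring
  exact hlt.not_ge hsum

/-- The path of the tree followed by `D₀` is missed by `G` and carries `w`-probability at least
`α ^ n`, so on some branch leaving that path the average of `G` exceeds `B`. -/
lemma HasDecisionTree.exists_lt_prob {α β B : ℝ} (hα₀ : 0 ≤ α) (hα₁ : α ≤ 1) (hβ₀ : 0 ≤ β)
    (hβ₁ : β ≤ 1) (hB : 0 ≤ B) {G : Set (Q → σ)} {n : ℕ} {S : Set (Q → σ)}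
    (hS : HasDecisionTree n S) {w u : Q → σ → ℝ} (h : ∀ i, AtomsBounded α β (w i) (u i))
    {D₀ : Q → σ} (hD₀ : mass w D₀ ≠ 0) (hD₀S : D₀ ∉ S)
    (hGS : ∀ D ∈ G, mass w D ≠ 0 → D ∈ S) (hlt : (1 - α ^ n) * B < prob w G) :
    ∃ w' u' : Q → σ → ℝ, (∀ i, AtomsBounded α β (w' i) (u' i)) ∧ B < prob w' G ∧
      β ^ n * prob u' G ≤ prob u G := by
  induction hS generalizing w u with
  | empty =>
    have hzero : prob w G = 0 := by
      rw [← prob_empty w]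
      exact prob_congr fun D hD => iff_of_false (fun hDG => hGS D hDG hD) (Set.notMem_empty D)
    simp [hzero] at hlt
  | univ => exact absurd (Set.mem_univ D₀) hD₀S
  | @query n i S _ ih =>
    have hcond (b : σ) := forall₂_condition h i (AtomsBounded.single hα₁ hβ₁ b)
    have hwi : w i (D₀ i) ≠ 0 := Finset.prod_ne_zero_iff.1 hD₀ i (Finset.mem_univ i)
    by_cases hpath : (1 - α ^ n) * B < prob (condition w i (D₀ i)) G
    · have hGS' : ∀ D ∈ G, mass (condition w i (D₀ i)) D ≠ 0 → D ∈ S (D₀ i) := fun D hDG hD => by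
        have hDi : D i = D₀ i := eq_of_mass_condition_ne_zero hD
        rw [← hDi] at hD hwi ⊢
        exact hGS D hDG ((mass_condition_ne_zero_iff hwi).1 hD)
      obtain ⟨w', u', h', hw', hu'⟩ :=
        ih _ (hcond _) ((mass_condition_ne_zero_iff hwi).2 hD₀) hD₀S hGS' hpath
      refine ⟨w', u', h', hw', ?_⟩
      calc β ^ (n + 1) * prob u' G = β * (β ^ n * prob u' G) := by ring
        _ ≤ β * prob (condition u i (D₀ i)) G := mul_le_mul_of_nonneg_left hu' hβ₀
        _ ≤ prob u G := AtomsBounded.mul_prob_condition_le h hwi G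
    · have hdefect : (1 - w i (D₀ i) * α ^ n) * B ≤ (1 - α ^ (n + 1)) * B := by
        rw [pow_succ']
        gcongr
        exact (h i).le_left _ hwi
      rw [prob_eq_sum_condition w i] at hlt
      obtain ⟨c, hc, hBc⟩ := exists_lt_of_lt_sum_mul (h i).left_mem (not_lt.1 hpath)
        (hdefect.trans_lt hlt)
      refine ⟨_, _, hcond c, hBc, le_trans ?_ (AtomsBounded.mul_prob_condition_le h hc G)⟩
      exact mul_le_mul_of_nonneg_right (pow_le_of_le_one hβ₀ hβ₁ n.succ_ne_zero)
        (prob_nonneg (fun j => (hcond c j).right_mem) G)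

lemma pow_le_prob_iInter {ι : Type*} {α β : ℝ} (hα₀ : 0 ≤ α) (hα₁ : α ≤ 1) (hβ₀ : 0 ≤ β)
    (hβ₁ : β ≤ 1) {n : ℕ} {S : ι → Set (Q → σ)} (hS : ∀ x, HasDecisionTree n (S x)) (m : ℕ)
    {w u : Q → σ → ℝ} (h : ∀ i, AtomsBounded α β (w i) (u i))
    (hlt : (1 - α ^ n) ^ m < prob w (⋂ x, S x)) : (β ^ n) ^ m ≤ prob u (⋂ x, S x) := by
  induction m generalizing w u with
  | zero => simpa using hlt.trans_le (prob_le_one (fun i => (h i).left_mem) _)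
  | succ m ih =>
    by_cases hall : ∀ D, mass w D ≠ 0 → ∀ x, D ∈ S x
    · have hone : prob u (⋂ x, S x) = 1 := by
        rw [← prob_univ fun i => (h i).right_mem]
        refine prob_congr fun D hD => iff_of_true (Set.mem_iInter.2 (hall D ?_)) (Set.mem_univ D)
        rw [mass, Finset.prod_ne_zero_iff] at hD ⊢
        exact fun i hi => (h i).left_ne_zero _ (hD i hi)
      rw [hone]
      exact pow_le_one₀ (pow_nonneg hβ₀ n) (pow_le_one₀ hβ₀ hβ₁)
    · push Not at hall
      obtain ⟨D₀, hD₀, x, hx⟩ := hall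
      have hB : 0 ≤ (1 - α ^ n) ^ m := pow_nonneg (sub_nonneg.2 (pow_le_one₀ hα₀ hα₁)) m
      rw [pow_succ'] at hlt
      obtain ⟨w', u', h', hw', hu'⟩ := (hS x).exists_lt_prob hα₀ hα₁ hβ₀ hβ₁ hB h hD₀ hx
        (fun D hD _ => Set.mem_iInter.1 hD x) hlt
      calc (β ^ n) ^ (m + 1) = β ^ n * (β ^ n) ^ m := pow_succ' _ _
        _ ≤ β ^ n * prob u' (⋂ x, S x) := mul_le_mul_of_nonneg_left (ih h' hw') (pow_nonneg hβ₀ n)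
        _ ≤ prob u (⋂ x, S x) := hu'

end DecisionTree

section Noise

variable {Q : Type*}

/-- The law on `Q → Bool` of a noisy copy of `c`: each bit independently agrees with `c` with
probability `p`. -/
noncomputable def noisyCopy (p : ℝ) (c : Q → Bool) : Q → Bool → ℝ :=
  fun i b => if b = c i then p else 1 - p

/-- The uniform law on `Q → Bool`. -/
noncomputable def uniformBits : Q → Bool → ℝ :=
  fun _ _ => 1 / 2

lemma noisyCopy_mem_stdSimplex {p : ℝ} (hp₀ : 0 ≤ p) (hp₁ : p ≤ 1) (c : Q → Bool) (i : Q) :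
    noisyCopy p c i ∈ stdSimplex ℝ Bool := by
  refine ⟨fun b => ?_, ?_⟩
  · unfold noisyCopy
    split_ifs <;> linarith
  · cases h : c i <;> simp [noisyCopy, h]

lemma uniformBits_mem_stdSimplex (i : Q) : uniformBits i ∈ stdSimplex ℝ Bool := by
  constructor <;> norm_num [uniformBits]

lemma dominated_noisyCopy_uniformBits {δ : ℝ} (hδ₀ : 0 ≤ δ) (hδ₁ : δ ≤ 1 / 2) (c : Q → Bool)
    (i : Q) : Dominated (1 + 2 * δ) (noisyCopy (1 / 2 + δ) c i) (uniformBits i) where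
  left_mem := noisyCopy_mem_stdSimplex (by linarith) (by linarith) c i
  right_mem := uniformBits_mem_stdSimplex i
  le b := by
    unfold noisyCopy uniformBits
    split_ifs <;> linarith

lemma atomsBounded_noisyCopy_uniformBits {δ : ℝ} (hδ₀ : 0 ≤ δ) (hδ₁ : δ ≤ 1 / 4) (c : Q → Bool)
    (i : Q) : AtomsBounded (1 / 4) (1 / 2) (noisyCopy (1 / 2 + δ) c i) (uniformBits i) := by
  have hle (b : Bool) : 1 / 4 ≤ noisyCopy (1 / 2 + δ) c i b := by
    unfold noisyCopy
    split_ifs <;> linarith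
  exact
    { left_mem := noisyCopy_mem_stdSimplex (by linarith) (by linarith) c i
      right_mem := uniformBits_mem_stdSimplex i
      le_left := fun b _ => hle b
      le_right := fun _ _ => le_rfl
      left_ne_zero := fun b _ => ((by norm_num : (0 : ℝ) < 1 / 4).trans_le (hle b)).ne' }

lemma bernoulli_exp_moment_le {p s : ℝ} (hp₀ : 0 ≤ p) (hp₁ : p ≤ 1) (hs : |s| ≤ 1) :
    p * Real.exp (s * (p - 1)) + (1 - p) * Real.exp (s * p) ≤ Real.exp (s ^ 2 / 4) := by
  have hexp : ∀ y : ℝ, |y| ≤ 1 → Real.exp (s * y) ≤ 1 + s * y + (s * y) ^ 2 := fun y hy => by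
    have hsy : |s * y| ≤ 1 := by
      rw [abs_mul]
      exact mul_le_one₀ hs (abs_nonneg y) hy
    linarith [(abs_le.1 (Real.abs_exp_sub_one_sub_id_le hsy)).2]
  have hneg := hexp (p - 1) (by rw [abs_le]; constructor <;> linarith)
  have hpos := hexp p (by rw [abs_le]; constructor <;> linarith)
  calc p * Real.exp (s * (p - 1)) + (1 - p) * Real.exp (s * p)
      ≤ p * (1 + s * (p - 1) + (s * (p - 1)) ^ 2) + (1 - p) * (1 + s * p + (s * p) ^ 2) :=
        add_le_add (mul_le_mul_of_nonneg_left hneg hp₀)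
          (mul_le_mul_of_nonneg_left hpos (sub_nonneg.2 hp₁))
    _ = s ^ 2 / 4 + 1 - s ^ 2 * (p - 1 / 2) ^ 2 := by ring
    _ ≤ s ^ 2 / 4 + 1 := sub_le_self _ (by positivity)
    _ ≤ Real.exp (s ^ 2 / 4) := Real.add_one_le_exp _

variable [Fintype Q]

lemma card_mul_uPr (P : Q → Prop) [DecidablePred P] :
    (Fintype.card Q : ℝ) * uPr P = ∑ i, if P i then 1 else 0 := by
  rw [uPr, mul_div_cancel_of_imp', Fintype.card_subtype, Finset.sum_boole]
  intro hQ
  have : IsEmpty Q := Fintype.card_eq_zero_iff.1 (Nat.cast_eq_zero.1 hQ)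
  simp

/-- Chernoff's method: bound the indicator of the event by
`exp (2 * t * ∑ i, (p - t - [D i = c i]))`, whose expectation factors over the coordinates. -/
lemma prob_noisyCopy_uPr_lt_le {p t : ℝ} (hp₀ : 0 ≤ p) (hp₁ : p ≤ 1) (ht₀ : 0 ≤ t)
    (ht₁ : t ≤ 1 / 2) (c : Q → Bool) :
    prob (noisyCopy p c) {D | uPr (fun i => D i = c i) < p - t} ≤
      Real.exp (-t ^ 2 * Fintype.card Q) := by
  have hlaw := noisyCopy_mem_stdSimplex hp₀ hp₁ c
  set φ : Q → Bool → ℝ :=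
    fun i b => Real.exp (2 * t * (p - t - if b = c i then 1 else 0)) with hφ
  have hone : ∀ D ∈ {D : Q → Bool | uPr (fun i => D i = c i) < p - t}, 1 ≤ ∏ i, φ i (D i) := by
    intro D hD
    rw [hφ, ← Real.exp_sum, Real.one_le_exp_iff, ← Finset.mul_sum, Finset.sum_sub_distrib,
      ← card_mul_uPr fun i => D i = c i, Finset.sum_const, Finset.card_univ, nsmul_eq_mul,
      ← mul_sub]
    exact mul_nonneg (by linarith) (mul_nonneg (Nat.cast_nonneg _) (sub_nonneg.2 hD.le))
  have hcoord : ∀ i, ∑ b, noisyCopy p c i b * φ i b ≤ Real.exp (-t ^ 2) := by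
    intro i
    calc ∑ b, noisyCopy p c i b * φ i b
        = Real.exp (-2 * t ^ 2) *
            (p * Real.exp (2 * t * (p - 1)) + (1 - p) * Real.exp (2 * t * p)) := by
          rw [mul_add, mul_left_comm, mul_left_comm _ (1 - p), ← Real.exp_add, ← Real.exp_add]
          cases h : c i <;> simp [noisyCopy, φ, h] <;> ring_nf
      _ ≤ Real.exp (-2 * t ^ 2) * Real.exp ((2 * t) ^ 2 / 4) := by
          gcongr
          exact bernoulli_exp_moment_le hp₀ hp₁ (by rw [abs_le]; constructor <;> linarith)
      _ = Real.exp (-t ^ 2) := by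
          rw [← Real.exp_add]
          ring_nf
  calc prob (noisyCopy p c) {D | uPr (fun i => D i = c i) < p - t}
      ≤ ∏ i, ∑ b, noisyCopy p c i b * φ i b :=
        prob_le_prod_sum_mul hlaw (fun _ _ => (Real.exp_pos _).le) hone
    _ ≤ ∏ _i : Q, Real.exp (-t ^ 2) :=
        Finset.prod_le_prod (fun i _ => Finset.sum_nonneg fun b _ =>
          mul_nonneg ((hlaw i).1 b) (Real.exp_pos _).le) fun i _ => hcoord i
    _ = Real.exp (-t ^ 2 * Fintype.card Q) := by
        rw [Finset.prod_const, Finset.card_univ, ← Real.exp_nat_mul, mul_comm]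

end Noise

section BlackBoxProof

variable {X Q A : Type*} [Fintype Q] {q : ℕ} {ε : ℝ} {Con : (X → Bool) → Q → Bool}
  {Red : OracleProc q (X × A) Q}

/-- `(Con, Red)` is a black-box HF ⇒ `(1/2 + ε)`-HF proof: whenever an oracle agrees with `Con f` on
a `1/2 + ε` fraction of the points, `Red` with some advice computes `f` from that oracle. Inputs,
queries and advice range over arbitrary types instead of bit strings. -/
def IsBlackBoxHFProof (ε : ℝ) (Con : (X → Bool) → Q → Bool) (Red : OracleProc q (X × A) Q) :
    Prop :=
  ∀ (f : X → Bool) (D : Q → Bool), 1 / 2 + ε ≤ uPr (fun i => D i = Con f i) →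
    ∃ a, ∀ x, Red.run D (x, a) = f x

/-- The oracles from which `Red` with advice `a` computes `f`. -/
def correctOracles (Red : OracleProc q (X × A) Q) (f : X → Bool) (a : A) : Set (Q → Bool) :=
  ⋂ x, {D | Red.run D (x, a) = f x}

lemma exists_lt_prob_correctOracles [Fintype A] (hRed : IsBlackBoxHFProof ε Con Red)
    (hε₀ : 0 ≤ ε) (hε₁ : ε ≤ 1 / 4) (hQ : 16 ≤ ε ^ 2 * Fintype.card Q) (f : X → Bool) :
    ∃ a, 7 / 8 / Fintype.card A <
      prob (noisyCopy (1 / 2 + 2 * ε) (Con f)) (correctOracles Red f a) := by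
  set w := noisyCopy (1 / 2 + 2 * ε) (Con f)
  have hw := noisyCopy_mem_stdSimplex (p := 1 / 2 + 2 * ε) (by linarith) (by linarith) (Con f)
  set far : Set (Q → Bool) := {D | uPr (fun i => D i = Con f i) < 1 / 2 + 2 * ε - ε}
  have hfar : prob w far ≤ 1 / 17 :=
    calc prob w far ≤ Real.exp (-ε ^ 2 * Fintype.card Q) :=
          prob_noisyCopy_uPr_lt_le (by linarith) (by linarith) hε₀ (by linarith) (Con f)
      _ ≤ Real.exp (-16) := Real.exp_le_exp.2 (by linarith)
      _ ≤ 1 / 17 := by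
          rw [Real.exp_neg, one_div]
          exact inv_anti₀ (by norm_num) (by linarith [Real.add_one_le_exp (16 : ℝ)])
  have hnear : farᶜ ⊆ ⋃ a, correctOracles Red f a := fun D hD => by
    have hclose : 1 / 2 + 2 * ε - ε ≤ uPr fun i => D i = Con f i := not_lt.1 hD
    obtain ⟨a, ha⟩ := hRed f D (by linarith)
    exact Set.mem_iUnion.2 ⟨a, Set.mem_iInter.2 ha⟩
  have hsum : ∑ _a : A, (7 / 8 : ℝ) / Fintype.card A < ∑ a, prob w (correctOracles Red f a) :=
    calc ∑ _a : A, (7 / 8 : ℝ) / Fintype.card A ≤ 7 / 8 := by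
          rw [Finset.sum_const, Finset.card_univ, nsmul_eq_mul, mul_div_left_comm]
          exact mul_le_of_le_one_right (by norm_num) (div_self_le_one _)
      _ < prob w farᶜ := by linarith [prob_add_prob_compl hw far]
      _ ≤ prob w (⋃ a, correctOracles Red f a) := prob_mono hw hnear
      _ ≤ ∑ a, prob w (correctOracles Red f a) := prob_iUnion_le hw _
  obtain ⟨a, -, ha⟩ := Finset.exists_lt_of_sum_lt hsum
  exact ⟨a, ha⟩

/-- For fixed advice the events `correctOracles Red f a` partition the oracles, so each of the
`|A|` advice strings serves functions `f` of total probability at most one. -/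
lemma two_pow_card_mul_le_card [Fintype X] [Fintype A] {u : Q → Bool → ℝ}
    (hu : ∀ i, u i ∈ stdSimplex ℝ Bool) {γ : ℝ}
    (h : ∀ f, ∃ a, γ ≤ prob u (correctOracles Red f a)) :
    2 ^ Fintype.card X * γ ≤ Fintype.card A := by
  have hpartition : ∀ a, ∑ f, prob u (correctOracles Red f a) = 1 := fun a => by
    rw [← sum_prob_preimage_singleton hu fun D x => Red.run D (x, a)]
    congr! 2 with f
    ext D
    simp [correctOracles, funext_iff]
  choose advice hadvice using h
  calc (2 : ℝ) ^ Fintype.card X * γ = ∑ _f : X → Bool, γ := by simp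
    _ ≤ ∑ f, ∑ a, prob u (correctOracles Red f a) :=
        Finset.sum_le_sum fun f _ => (hadvice f).trans <|
          Finset.single_le_sum (f := fun a => prob u (correctOracles Red f a))
            (fun a _ => prob_nonneg hu _) (Finset.mem_univ (advice f))
    _ = ∑ a, ∑ f, prob u (correctOracles Red f a) := Finset.sum_comm
    _ = Fintype.card A := by simp [hpartition]

lemma two_pow_card_mul_div_le [Fintype X] [Fintype A] (hRed : IsBlackBoxHFProof ε Con Red)
    (hε₀ : 0 ≤ ε) (hε₁ : ε ≤ 1 / 4) (hQ : 16 ≤ ε ^ 2 * Fintype.card Q) :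
    (2 : ℝ) ^ Fintype.card X *
        (7 / 8 / Fintype.card A / (1 + 4 * ε) ^ (q * Fintype.card X)) ≤ Fintype.card A := by
  refine two_pow_card_mul_le_card (Red := Red) uniformBits_mem_stdSimplex fun f => ?_
  obtain ⟨a, ha⟩ := exists_lt_prob_correctOracles hRed hε₀ hε₁ hQ f
  refine ⟨a, ?_⟩
  have hdom := dominated_noisyCopy_uniformBits (δ := 2 * ε) (by linarith) (by linarith) (Con f)
  have hle := prob_biInter_le_pow_mul (by linarith) (fun x => hasDecisionTree_run Red (x, a) (f x))
    Finset.univ hdom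
  rw [div_le_iff₀' (by positivity)]
  calc 7 / 8 / (Fintype.card A : ℝ)
      ≤ prob (noisyCopy (1 / 2 + 2 * ε) (Con f)) (correctOracles Red f a) := ha.le
    _ ≤ (1 + 4 * ε) ^ (q * Fintype.card X) * prob uniformBits (correctOracles Red f a) := by
        convert hle using 2
        · simp [correctOracles]
        · congr 1; ring
        · simp [correctOracles]

lemma one_sub_quarter_pow_le {q N K : ℕ} (hN : 0 < N) (hNK : N ≤ 2 ^ K) :
    (1 - (1 / 4 : ℝ) ^ q) ^ (4 ^ q * (K + 1)) ≤ 7 / 8 / N := by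
  have hhalf : (1 - (1 / 4 : ℝ) ^ q) ^ 4 ^ q ≤ 1 / 2 := by
    have hexp := Real.one_sub_div_pow_le_exp_neg (n := 4 ^ q) (t := 1)
      (by exact_mod_cast Nat.one_le_pow _ _ (by norm_num))
    rw [Nat.cast_pow, Nat.cast_ofNat, ← one_div_pow] at hexp
    exact hexp.trans Real.exp_neg_one_lt_half.le
  have hbase : (0 : ℝ) ≤ 1 - (1 / 4) ^ q :=
    sub_nonneg.2 (pow_le_one₀ (by norm_num) (by norm_num))
  calc (1 - (1 / 4 : ℝ) ^ q) ^ (4 ^ q * (K + 1)) ≤ (1 / 2) ^ (K + 1) := by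
        rw [pow_mul]
        exact pow_le_pow_left₀ (pow_nonneg hbase _) hhalf _
    _ = 1 / 2 / 2 ^ K := by rw [pow_succ', one_div_pow, mul_one_div]
    _ ≤ 7 / 8 / N :=
        div_le_div₀ (by norm_num) (by norm_num) (by exact_mod_cast hN) (by exact_mod_cast hNK)

lemma card_le_clog_card_add [Fintype X] [Fintype A] (hRed : IsBlackBoxHFProof ε Con Red)
    (hε₀ : 0 ≤ ε) (hε₁ : ε ≤ 1 / 8) (hQ : 16 ≤ ε ^ 2 * Fintype.card Q) :
    Fintype.card X ≤
      Nat.clog 2 (Fintype.card A) + q * (4 ^ q * (Nat.clog 2 (Fintype.card A) + 1)) := by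
  set K := Nat.clog 2 (Fintype.card A)
  have hAK : Fintype.card A ≤ 2 ^ K := Nat.le_pow_clog (by norm_num) _
  have hcount : (2 : ℝ) ^ Fintype.card X * ((1 / 2) ^ q) ^ (4 ^ q * (K + 1)) ≤ Fintype.card A := by
    refine two_pow_card_mul_le_card (Red := Red) uniformBits_mem_stdSimplex fun f => ?_
    obtain ⟨a, ha⟩ := exists_lt_prob_correctOracles hRed hε₀ (by linarith) hQ f
    have hatoms :=
      atomsBounded_noisyCopy_uniformBits (δ := 2 * ε) (by linarith) (by linarith) (Con f)
    have hthreshold := one_sub_quarter_pow_le (q := q) (Fintype.card_pos_iff.2 ⟨a⟩) hAK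
    exact ⟨a, pow_le_prob_iInter (by norm_num) (by norm_num) (by norm_num) (by norm_num)
      (fun x => hasDecisionTree_run Red (x, a) (f x)) _ hatoms (hthreshold.trans_lt ha)⟩
  rw [← pow_mul, one_div_pow, mul_one_div, div_le_iff₀ (by positivity)] at hcount
  have hpow : (2 : ℝ) ^ Fintype.card X ≤ 2 ^ (K + q * (4 ^ q * (K + 1))) := by
    rw [pow_add]
    exact hcount.trans (mul_le_mul_of_nonneg_right (by exact_mod_cast hAK) (by positivity))
  exact (pow_le_pow_iff_right₀ (one_lt_two : (1 : ℝ) < 2)).1 hpow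

lemma one_tenth_mul_inv_le_queries [Fintype X] [Nonempty X] [Fintype A]
    (hRed : IsBlackBoxHFProof ε Con Red) (hε₀ : 0 < ε) (hε₁ : ε ≤ 1 / 4)
    (hQ : 16 ≤ ε ^ 2 * Fintype.card Q)
    (hA : Real.logb 2 (Fintype.card A) ≤ Fintype.card X / 10) : 1 / 10 * (1 / ε) ≤ q := by
  have hcount := two_pow_card_mul_div_le hRed hε₀.le hε₁ hQ
  have hApos : (0 : ℝ) < Fintype.card A := by
    obtain ⟨a, -⟩ := exists_lt_prob_correctOracles hRed hε₀.le hε₁ hQ fun _ => false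
    exact_mod_cast Fintype.card_pos_iff.2 ⟨a⟩
  have hXone : (1 : ℝ) ≤ Fintype.card X := by exact_mod_cast Fintype.card_pos
  rw [Real.logb, div_le_iff₀ (Real.log_pos one_lt_two)] at hA
  rw [div_div, ← mul_div_assoc, div_le_iff₀ (by positivity), ← mul_assoc] at hcount
  have hlog := Real.log_le_log (by positivity) hcount
  rw [Real.log_mul (by positivity) (by norm_num), Real.log_mul (by positivity) (by positivity),
    Real.log_mul (by positivity) (by positivity), Real.log_pow, Real.log_pow,
    Nat.cast_mul] at hlog
  set N := (Fintype.card X : ℝ)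
  have hlog_noise : q * N * Real.log (1 + 4 * ε) ≤ q * N * (4 * ε) :=
    mul_le_mul_of_nonneg_left
      (by linarith [Real.log_le_sub_one_of_pos (show 0 < 1 + 4 * ε by linarith)]) (by positivity)
  have hlog_success : -(1 / 7) ≤ Real.log (7 / 8) := by
    linarith [Real.one_sub_inv_le_log_of_pos (show (0 : ℝ) < 7 / 8 by norm_num)]
  have hlog_two : N * 0.69 ≤ N * Real.log 2 :=
    mul_le_mul_of_nonneg_left (by linarith [Real.log_two_gt_d9]) (by linarith)
  have hN : N * (4 / 10) ≤ N * (4 * (q * ε)) := by linarith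
  rw [mul_one_div, div_le_iff₀ hε₀]
  linarith [le_of_mul_le_mul_left hN (by linarith)]

end BlackBoxProof

lemma add_mul_four_pow_mul_le {q : ℕ} (hq : 1 ≤ q) (K : ℕ) :
    K + q * (4 ^ q * (K + 1)) ≤ max K 1 * 2 ^ (5 * q) := by
  have hK : K ≤ max K 1 := le_max_left K 1
  have hK' : K + 1 ≤ 2 * max K 1 := by omega
  have h8 : q * 4 ^ q ≤ 8 ^ q :=
    calc q * 4 ^ q ≤ 2 ^ q * 4 ^ q := Nat.mul_le_mul_right _ Nat.lt_two_pow_self.le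
      _ = 8 ^ q := (mul_pow 2 4 q).symm
  calc K + q * (4 ^ q * (K + 1)) = K * 1 + (K + 1) * (q * 4 ^ q) := by ring
    _ ≤ max K 1 * 8 ^ q + 2 * max K 1 * 8 ^ q := by
        gcongr
        exact Nat.one_le_pow _ _ (by norm_num)
    _ = max K 1 * (3 * 8 ^ q) := by ring
    _ ≤ max K 1 * (4 ^ q * 8 ^ q) := by
        gcongr
        exact le_trans (by norm_num) (Nat.pow_le_pow_right (by norm_num : 0 < 4) hq)
    _ = max K 1 * 2 ^ (5 * q) := by rw [← mul_pow, pow_mul]; norm_num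

lemma logb_max_clog_one_le {N : ℕ} (hN : 0 < N) :
    Real.logb 2 (max (Nat.clog 2 N) 1 : ℕ) ≤ Real.logb 2 (2 * Real.logb 2 N) := by
  rcases (Nat.one_le_iff_ne_zero.2 hN.ne').eq_or_lt with rfl | hN
  · simp
  have hlog : 1 ≤ Real.logb 2 N := by
    rw [Real.le_logb_iff_rpow_le one_lt_two (by positivity), Real.rpow_one]
    exact_mod_cast hN
  refine Real.logb_le_logb_of_le one_lt_two (by positivity) ?_
  rw [Nat.cast_max, Nat.cast_one, ← Real.natCeil_logb_natCast, Nat.cast_ofNat]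
  exact max_le (by linarith [Nat.ceil_lt_add_one (zero_le_one.trans hlog)]) (by linarith)

lemma one_fifth_mul_logb_sub_le_queries {X Q A : Type*} [Fintype X] [Nonempty X] [Fintype Q]
    [Fintype A] {q : ℕ} (hq : 1 ≤ q) {ε : ℝ} {Con : (X → Bool) → Q → Bool}
    {Red : OracleProc q (X × A) Q} (hRed : IsBlackBoxHFProof ε Con Red) (hε₀ : 0 ≤ ε)
    (hε₁ : ε ≤ 1 / 8) (hQ : 16 ≤ ε ^ 2 * Fintype.card Q) :
    1 / 5 * (Real.logb 2 (Fintype.card X) - Real.logb 2 (2 * Real.logb 2 (Fintype.card A))) ≤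
      q := by
  have hX : 0 < Fintype.card X := Fintype.card_pos
  have hA : 0 < Fintype.card A := by
    obtain ⟨a, -⟩ := exists_lt_prob_correctOracles hRed hε₀ (by linarith) hQ fun _ => false
    exact Fintype.card_pos_iff.2 ⟨a⟩
  have hcard : (Fintype.card X : ℝ) ≤
      (max (Nat.clog 2 (Fintype.card A)) 1 : ℕ) * 2 ^ (5 * q) := by
    exact_mod_cast (card_le_clog_card_add hRed hε₀ hε₁ hQ).trans (add_mul_four_pow_mul_le hq _)
  have hlog := Real.logb_le_logb_of_le one_lt_two (by exact_mod_cast hX) hcard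
  rw [Real.logb_mul (by positivity) (by positivity), Real.logb_pow,
    Real.logb_self_eq_one one_lt_two, mul_one, Nat.cast_mul, Nat.cast_ofNat] at hlog
  linarith [logb_max_clog_one_le hA]

lemma sixteen_le_sq_mul_of_logb_le {ε M : ℝ} (hε : 0 < ε) (hM : 0 < M)
    (h : Real.logb 2 (1 / ε ^ 2) + 4 ≤ Real.logb 2 M) : 16 ≤ ε ^ 2 * M := by
  have hfour : (4 : ℝ) = Real.logb 2 16 := by
    rw [show (16 : ℝ) = 2 ^ 4 by norm_num, Real.logb_pow, Real.logb_self_eq_one one_lt_two]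
    norm_num
  rw [hfour, ← Real.logb_mul (by positivity) (by norm_num),
    Real.logb_le_logb one_lt_two (by positivity) hM, div_mul_eq_mul_div, one_mul,
    div_le_iff₀' (by positivity)] at h
  exact h

end HardnessAmplification

open HardnessAmplification in
theorem hardness_amplification_query_lower_bound_general {X Q A : Type*} [Fintype X] [Nonempty X]
    [Fintype Q] [Nonempty Q] [Fintype A] {q : ℕ} {ε : ℝ} {Con : (X → Bool) → Q → Bool}
    {Red : OracleProc q (X × A) Q} (hRed : IsBlackBoxHFProof ε Con Red) (hε₀ : 0 < ε)
    (hε₁ : ε ≤ 1 / 8) (hQ : Real.logb 2 (1 / ε ^ 2) + 4 ≤ Real.logb 2 (Fintype.card Q))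
    (hA : Real.logb 2 (Fintype.card A) ≤ Fintype.card X / 10) :
    max (1 / 10 * (1 / ε))
      (1 / 5 * (Real.logb 2 (Fintype.card X) - Real.logb 2 (2 * Real.logb 2 (Fintype.card A)))) ≤
        q := by
  have hQ' := sixteen_le_sq_mul_of_logb_le hε₀ (by exact_mod_cast Fintype.card_pos) hQ
  have hq := one_tenth_mul_inv_le_queries hRed hε₀ (by linarith) hQ' hA
  have hqpos : 1 ≤ q := by
    have : (0 : ℝ) < q := lt_of_lt_of_le (by positivity) hq
    exact_mod_cast this
  exact max_le hq (one_fifth_mul_logb_sub_le_queries hqpos hRed hε₀.le hε₁ hQ')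

/-- Theorem 1.8: lower bound on the number of queries in black-box hardness amplification,
applicable at the extreme high-end. -/
theorem hardness_amplification_query_lower_bound :
    ∃ c₁ c₂ c₃ : ℝ, c₁ > 0 ∧ c₂ > 0 ∧ c₃ > 0 ∧
      ∀ (ℓ ℓ' a q : ℕ) (ε : ℝ)
        (Con : ((Fin ℓ → Bool) → Bool) → (Fin ℓ' → Bool) → Bool)
        (Red : OracleProc q ((Fin ℓ → Bool) × (Fin a → Bool)) (Fin ℓ' → Bool)),
        -- (Con, Red) is a black-box HF ⇒ (1/2+ε)-HF proof:
        (∀ (f : (Fin ℓ → Bool) → Bool) (D : (Fin ℓ' → Bool) → Bool),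
            uPr (fun x : Fin ℓ' → Bool => D x = Con f x) ≥ 1 / 2 + ε →
            ∃ α : Fin a → Bool, ∀ x : Fin ℓ → Bool, OracleProc.run Red D (x, α) = f x) →
        0 < ε → ε ≤ 1 / 10 →
        (ℓ' : ℝ) ≥ Real.logb 2 (1 / ε ^ 2) + c₃ →
        (a : ℝ) ≤ 2 ^ ℓ / 10 →
        (q : ℝ) ≥ max (c₁ * (1 / ε)) (c₂ * ((ℓ : ℝ) - Real.logb 2 (2 * a))) := by
  refine ⟨1 / 10, 1 / 5, 4, by norm_num, by norm_num, by norm_num,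
    fun ℓ ℓ' a q ε Con Red hRed hε₀ hε₁ hℓ' ha => ?_⟩
  simpa [Real.logb_pow] using hardness_amplification_query_lower_bound_general (Con := Con) hRed hε₀
    (hε₁.trans (by norm_num)) (by simpa [Real.logb_pow] using hℓ')
    (by simpa [Real.logb_pow] using ha)
end

section
/- There exist constants c₁ > 0 and c₃ > 0 such that the following holds. Let (Con, Red) be a black-box HF⇒(1/2+ε)-HF proof with parameters (ℓ, ℓ', a) whose reduction makes q queries. If 0 < ε ≤ 1/10, a ≤ 2^ℓ/10, and ℓ' ≥ log₂(1/ε²) + c₃, then q ≥ c₁·(1/ε). -/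
/-!
Fix `f` and let `D` agree with `Con f` independently at each point with probability `p = 1/2 + 2ε`.
By a Chernoff bound `D` usually `(1/2 + ε)`-breaks `Con f`, so some advice `α` decodes `f` from `D`.
The event that `α` decodes `f` is certified by the at most `q |X|` oracle answers read on the inputs
in `X`. Coupling `D` with a uniform oracle that leaves each answer untouched with probability
`1/(2p)` shows that passing to a uniform `D` costs at most a factor `(2p)^(q |X|)`. A uniform `D`
does not depend on `f`, and a pair `(D, α)` decodes only one `f`; summing over all `f` gives
`3/4 * 2^|X| ≤ (2p)^(q |X|) * |Λ|`, where `Λ` is the set of advice strings, hence `q = Ω(1/ε)`.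
-/

open scoped BigOperators

attribute [local instance] Classical.propDecidable

section

open Finset Real

section ProductWeights

variable {Q β : Type*}

/-- The certificate complexity of the event `A` is at most `k`: membership of any point of `A` is
already forced by at most `k` of its coordinates. -/
def CertificateComplexityLE (A : Set (Q → β)) (k : ℕ) : Prop :=
  ∀ D ∈ A, ∃ S : Finset Q, #S ≤ k ∧ ∀ D' : Q → β, (∀ z ∈ S, D' z = D z) → D' ∈ A

variable [Fintype Q] [Fintype β]

/-- The mass that the product of the weights `w z` on the coordinates `z : Q` gives to the event
`A`; it is a probability when each `w z` lies in the standard simplex. -/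
noncomputable def piMass (w : Q → β → ℝ) (A : Set (Q → β)) : ℝ :=
  ∑ D, A.indicator (fun D => ∏ z, w z (D z)) D

variable {w : Q → β → ℝ}

theorem piMass_coe (w : Q → β → ℝ) (A : Finset (Q → β)) :
    piMass w A = ∑ D ∈ A, ∏ z, w z (D z) :=
  sum_indicator_subset _ (subset_univ A)

theorem prod_weight_nonneg (hw : ∀ z, w z ∈ stdSimplex ℝ β) (D : Q → β) : 0 ≤ ∏ z, w z (D z) :=
  prod_nonneg fun z _ => (hw z).1 (D z)

theorem piMass_nonneg (hw : ∀ z, w z ∈ stdSimplex ℝ β) (A : Set (Q → β)) : 0 ≤ piMass w A :=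
  sum_nonneg fun D _ => Set.indicator_nonneg (fun D _ => prod_weight_nonneg hw D) D

theorem piMass_mono (hw : ∀ z, w z ∈ stdSimplex ℝ β) {A B : Set (Q → β)} (h : A ⊆ B) :
    piMass w A ≤ piMass w B :=
  sum_le_sum fun D _ => Set.indicator_le_indicator_of_subset h (prod_weight_nonneg hw) D

theorem sum_prod_weight_eq_one (hw : ∀ z, w z ∈ stdSimplex ℝ β) :
    ∑ D : Q → β, ∏ z, w z (D z) = 1 := by
  rw [← Fintype.prod_sum]
  exact prod_eq_one fun z _ => (hw z).2

theorem piMass_compl (hw : ∀ z, w z ∈ stdSimplex ℝ β) (A : Set (Q → β)) :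
    piMass w Aᶜ = 1 - piMass w A := by
  rw [← sum_prod_weight_eq_one hw, eq_sub_iff_add_eq', piMass, piMass, ← sum_add_distrib]
  exact sum_congr rfl fun D _ => congrFun (Set.indicator_self_add_compl A _) D

theorem piMass_iUnion_le {ι : Type*} [Fintype ι] (hw : ∀ z, w z ∈ stdSimplex ℝ β)
    (B : ι → Set (Q → β)) : piMass w (⋃ i, B i) ≤ ∑ i, piMass w (B i) := by
  have hterm (D : Q → β) (i : ι) : 0 ≤ (B i).indicator (fun D => ∏ z, w z (D z)) D :=
    Set.indicator_nonneg (fun D _ => prod_weight_nonneg hw D) D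
  simp only [piMass]
  rw [sum_comm]
  refine sum_le_sum fun D _ => Set.indicator_apply_le' (fun hD => ?_)
    fun _ => sum_nonneg fun i _ => hterm D i
  obtain ⟨i, hi⟩ := Set.mem_iUnion.1 hD
  rw [← Set.indicator_of_mem hi fun D => ∏ z, w z (D z)]
  exact single_le_sum (fun j _ => hterm D j) (mem_univ i)

theorem piMass_forall_mem_eq (hw : ∀ z, w z ∈ stdSimplex ℝ β) (S : Finset Q) (D : Q → β) :
    piMass w {D' | ∀ z ∈ S, D' z = D z} = ∏ z ∈ S, w z (D z) := by
  have hcube : {D' : Q → β | ∀ z ∈ S, D' z = D z} =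
      Fintype.piFinset fun z => if z ∈ S then {D z} else univ := by
    ext D'
    rw [Set.mem_ofPred_eq, mem_coe, Fintype.mem_piFinset]
    refine forall_congr' fun z => ?_
    by_cases hz : z ∈ S <;> simp [hz]
  rw [hcube, piMass_coe, ← prod_univ_sum, ← Fintype.prod_ite_mem S]
  refine prod_congr rfl fun z _ => ?_
  by_cases hz : z ∈ S
  · simp [hz]
  · simpa [hz] using (hw z).2

theorem CertificateComplexityLE.pow_le_piMass {A : Set (Q → β)} {k : ℕ}
    (hA : CertificateComplexityLE A k) {D : Q → β} (hD : D ∈ A)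
    (hw : ∀ z, w z ∈ stdSimplex ℝ β) {r : ℝ} (hr₀ : 0 ≤ r) (hr₁ : r ≤ 1)
    (hr : ∀ z, r ≤ w z (D z)) : r ^ k ≤ piMass w A := by
  obtain ⟨S, hSk, hS⟩ := hA D hD
  calc r ^ k ≤ r ^ #S := pow_le_pow_of_le_one hr₀ hr₁ hSk
    _ = ∏ _z ∈ S, r := (prod_const r).symm
    _ ≤ ∏ z ∈ S, w z (D z) := prod_le_prod (fun _ _ => hr₀) fun z _ => hr z
    _ = piMass w {D' | ∀ z ∈ S, D' z = D z} := (piMass_forall_mem_eq hw S D).symm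
    _ ≤ piMass w A := piMass_mono hw hS

end ProductWeights

section Coupling

variable {β : Type*}

/-- The law, given a symbol `b` of law `μ`, of the symbol of law `ν` coupled to it: keep `b` with
probability `r`, and otherwise draw from the normalised residual weight `ν - r μ`. -/
noncomputable def couplingKernel (r : ℝ) (μ ν : β → ℝ) (b b' : β) : ℝ :=
  r * (if b' = b then 1 else 0) + (ν b' - r * μ b')

variable {r : ℝ} {μ ν : β → ℝ}

theorem le_couplingKernel_self (hdom : ∀ b, r * μ b ≤ ν b) (b : β) :
    r ≤ couplingKernel r μ ν b b := by
  simpa [couplingKernel] using hdom b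

variable [Fintype β]

theorem couplingKernel_mem_stdSimplex (hμ : μ ∈ stdSimplex ℝ β) (hν : ν ∈ stdSimplex ℝ β)
    (hr : 0 ≤ r) (hdom : ∀ b, r * μ b ≤ ν b) (b : β) :
    couplingKernel r μ ν b ∈ stdSimplex ℝ β := by
  refine ⟨fun b' => add_nonneg (by positivity) (sub_nonneg.2 (hdom b')), ?_⟩
  simp only [couplingKernel, sum_add_distrib, sum_sub_distrib, ← mul_sum, hμ.2, hν.2]
  simp

theorem sum_mul_couplingKernel (hμ : μ ∈ stdSimplex ℝ β) (b' : β) :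
    ∑ b, μ b * couplingKernel r μ ν b b' = ν b' := by
  simp only [couplingKernel, mul_add, sum_add_distrib, ← sum_mul, hμ.2]
  simp [mul_comm]

/-- Passing from `μ` to `ν` through the coupling keeps all coordinates of a certificate with
probability at least `R⁻¹ ^ k`. -/
theorem CertificateComplexityLE.piMass_le {Q : Type*} [Fintype Q] {A : Set (Q → β)} {k : ℕ}
    (hA : CertificateComplexityLE A k) {μ ν : Q → β → ℝ} (hμ : ∀ z, μ z ∈ stdSimplex ℝ β)
    (hν : ∀ z, ν z ∈ stdSimplex ℝ β) {R : ℝ} (hR : 1 ≤ R) (hdom : ∀ z b, μ z b ≤ R * ν z b) :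
    piMass μ A ≤ R ^ k * piMass ν A := by
  have hR₀ : 0 < R := zero_lt_one.trans_le hR
  have hdom' (z : Q) (b : β) : R⁻¹ * μ z b ≤ ν z b := (inv_mul_le_iff₀ hR₀).2 (hdom z b)
  let K (D : Q → β) (z : Q) : β → ℝ := couplingKernel R⁻¹ (μ z) (ν z) (D z)
  have hK (D : Q → β) (z : Q) : K D z ∈ stdSimplex ℝ β :=
    couplingKernel_mem_stdSimplex (hμ z) (hν z) (by positivity) (hdom' z) (D z)
  have hkeep : ∀ D ∈ A, R⁻¹ ^ k ≤ piMass (K D) A := fun D hD =>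
    hA.pow_le_piMass hD (hK D) (by positivity) (inv_le_one_of_one_le₀ hR) fun z =>
      le_couplingKernel_self (hdom' z) (D z)
  have hmarginal (D' : Q → β) :
      ∑ D : Q → β, (∏ z, μ z (D z)) * ∏ z, K D z (D' z) = ∏ z, ν z (D' z) := by
    simp only [← prod_mul_distrib, K]
    rw [← Fintype.prod_sum fun z b => μ z b * couplingKernel R⁻¹ (μ z) (ν z) b (D' z)]
    exact prod_congr rfl fun z _ => sum_mul_couplingKernel (hμ z) (D' z)
  rw [← inv_mul_le_iff₀ (by positivity), ← inv_pow]
  calc R⁻¹ ^ k * piMass μ A = ∑ D, A.indicator (fun D => (∏ z, μ z (D z)) * R⁻¹ ^ k) D := by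
        rw [mul_comm, piMass, sum_mul]
        simp only [Set.indicator_mul_const]
    _ ≤ ∑ D, (∏ z, μ z (D z)) * piMass (K D) A :=
        sum_le_sum fun D _ => Set.indicator_apply_le'
          (fun hD => mul_le_mul_of_nonneg_left (hkeep D hD) (prod_weight_nonneg hμ D))
          fun _ => mul_nonneg (prod_weight_nonneg hμ D) (piMass_nonneg (hK D) A)
    _ = ∑ D', A.indicator (fun D' => ∑ D : Q → β, (∏ z, μ z (D z)) * ∏ z, K D z (D' z)) D' := by
        simp only [piMass, mul_sum, Set.indicator_apply, mul_ite, mul_zero]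
        rw [sum_comm]
        refine sum_congr rfl fun D' _ => ?_
        split_ifs <;> simp
    _ = piMass ν A := by simp only [hmarginal, piMass]

end Coupling

section Chernoff

theorem exp_neg_le_one_sub_add_sq_div_two {s : ℝ} (hs : 0 ≤ s) :
    exp (-s) ≤ 1 - s + s ^ 2 / 2 := by
  rw [exp_neg]
  refine inv_le_of_inv_le₀ (by nlinarith [sq_nonneg (s - 1)]) ?_
  refine le_trans ?_ (quadratic_le_exp_of_nonneg hs)
  rw [inv_le_iff_one_le_mul₀ (by nlinarith [sq_nonneg (s - 1)])]
  nlinarith [sq_nonneg (s ^ 2)]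

variable {Q β : Type*} [Fintype Q] [Fintype β] [DecidableEq β] {w : Q → β → ℝ}

theorem sum_prod_mul_pow_card_agree (hw : ∀ z, w z ∈ stdSimplex ℝ β) (c : Q → β) (y : ℝ) :
    ∑ D : Q → β, (∏ z, w z (D z)) * y ^ #{z | D z = c z} = ∏ z, (1 - w z (c z) * (1 - y)) := by
  have hpow (D : Q → β) : y ^ #{z | D z = c z} = ∏ z, if D z = c z then y else 1 := by
    simp [prod_ite]
  simp only [hpow, ← prod_mul_distrib]
  rw [← Fintype.prod_sum fun z b => w z b * if b = c z then y else 1]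
  refine prod_congr rfl fun z _ => ?_
  have hsplit (b : β) :
      w z b * (if b = c z then y else 1) = w z b - if b = c z then w z b * (1 - y) else 0 := by
    split_ifs <;> ring
  simp only [hsplit, sum_sub_distrib, (hw z).2]
  simp

theorem piMass_card_agree_le_exp (hw : ∀ z, w z ∈ stdSimplex ℝ β) (c : Q → β) {m t : ℝ}
    (hmean : ∑ z, w z (c z) = m) (hm : 0 < m) (ht : 0 ≤ t) :
    piMass w {D | (#{z | D z = c z} : ℝ) ≤ m - t} ≤ exp (-(t ^ 2 / (2 * m))) := by
  obtain ⟨s, hs_def⟩ : ∃ s, s = t / m := ⟨_, rfl⟩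
  have hs : 0 ≤ s := by rw [hs_def]; positivity
  have hmarkov (D : Q → β) (hD : (#{z | D z = c z} : ℝ) ≤ m - t) :
      1 ≤ exp (s * (m - t)) * exp (-s) ^ #{z | D z = c z} := by
    rw [← exp_nat_mul, ← exp_add, one_le_exp_iff]
    nlinarith
  have hle_one (z : Q) : w z (c z) ≤ 1 :=
    (hw z).2 ▸ single_le_sum (fun b _ => (hw z).1 b) (mem_univ (c z))
  have hexp_le_one : exp (-s) ≤ 1 := exp_le_one_iff.2 (neg_nonpos.2 hs)
  calc piMass w {D | (#{z | D z = c z} : ℝ) ≤ m - t}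
    _ ≤ ∑ D : Q → β, (∏ z, w z (D z)) * (exp (s * (m - t)) * exp (-s) ^ #{z | D z = c z}) :=
        sum_le_sum fun D _ => Set.indicator_apply_le'
          (fun hD => le_mul_of_one_le_right (prod_weight_nonneg hw D) (hmarkov D hD))
          fun _ => mul_nonneg (prod_weight_nonneg hw D) (by positivity)
    _ = exp (s * (m - t)) * ∏ z, (1 - w z (c z) * (1 - exp (-s))) := by
        simp only [mul_left_comm _ (exp (s * (m - t))), ← mul_sum]
        rw [sum_prod_mul_pow_card_agree hw]
    _ ≤ exp (s * (m - t)) * ∏ z, exp (-(w z (c z) * (1 - exp (-s)))) := by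
        refine mul_le_mul_of_nonneg_left (prod_le_prod (fun z _ => ?_) fun z _ => ?_) (exp_pos _).le
        · nlinarith [hle_one z, exp_pos (-s)]
        · exact one_sub_le_exp_neg _
    _ = exp (s * (m - t) - m * (1 - exp (-s))) := by
        rw [← exp_sum, ← exp_add, sum_neg_distrib, ← sum_mul, hmean, ← sub_eq_add_neg]
    _ ≤ exp (-(t ^ 2 / (2 * m))) := by
        have hquad : s * (m - t) - m * (s - s ^ 2 / 2) = -(t ^ 2 / (2 * m)) := by
          rw [hs_def]
          field_simp
          ring
        rw [exp_le_exp, ← hquad]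
        nlinarith [exp_neg_le_one_sub_add_sq_div_two hs]

end Chernoff

section NoisyBits

/-- The law of a bit that equals `b` with probability `p`. -/
def noisyBit (p : ℝ) (b b' : Bool) : ℝ := if b' = b then p else 1 - p

theorem noisyBit_mem_stdSimplex {p : ℝ} (hp₀ : 0 ≤ p) (hp₁ : p ≤ 1) (b : Bool) :
    noisyBit p b ∈ stdSimplex ℝ Bool := by
  refine ⟨fun b' => ite_nonneg hp₀ (sub_nonneg.2 hp₁), ?_⟩
  cases b <;> simp [noisyBit]

theorem noisyBit_le {p : ℝ} (hp : 1 / 2 ≤ p) (b b' : Bool) : noisyBit p b b' ≤ p := by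
  unfold noisyBit
  split_ifs <;> linarith

theorem const_half_mem_stdSimplex : (fun _ => 1 / 2 : Bool → ℝ) ∈ stdSimplex ℝ Bool :=
  ⟨fun _ => by norm_num, by norm_num⟩

variable {Q : Type*} [Fintype Q]

theorem uPr_eq_card_filter_div (P : Q → Prop) [DecidablePred P] :
    uPr P = #{z | P z} / Fintype.card Q := by
  rw [uPr, Fintype.card_subtype]

theorem piMass_noisyBit_uPr_agree_le_exp [Nonempty Q] {p t : ℝ} (hp₀ : 0 < p) (hp₁ : p ≤ 1)
    (ht : 0 ≤ t) (c : Q → Bool) :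
    piMass (fun z => noisyBit p (c z)) {D | uPr (fun z => D z = c z) ≤ p - t} ≤
      exp (-(Fintype.card Q * t ^ 2 / (2 * p))) := by
  have hw (z : Q) := noisyBit_mem_stdSimplex hp₀.le hp₁ (c z)
  have hM : (0 : ℝ) < Fintype.card Q := mod_cast Fintype.card_pos
  have hmean : ∑ z, noisyBit p (c z) (c z) = Fintype.card Q * p := by simp [noisyBit]
  have hfar : {D : Q → Bool | uPr (fun z => D z = c z) ≤ p - t} =
      {D | (#{z | D z = c z} : ℝ) ≤ Fintype.card Q * p - Fintype.card Q * t} := by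
    ext D
    rw [Set.mem_ofPred_eq, Set.mem_ofPred_eq, uPr_eq_card_filter_div, div_le_iff₀ hM, mul_comm,
      mul_sub]
  rw [hfar]
  refine (piMass_card_agree_le_exp hw c hmean (by positivity)
    (mul_nonneg hM.le ht)).trans_eq ?_
  congr 1
  field_simp

end NoisyBits

section OracleProcedures

variable {q : ℕ} {I Q X Λ : Type*}

/-- The queries made when running with oracle `D` on input `w`. -/
noncomputable def OracleProc.queries (P : OracleProc q I Q) (D : Q → Bool) (w : I) : Finset Q :=
  univ.image fun i : Fin q => P.qry i w fun j => P.ans D w ⟨j.val, j.isLt.trans i.isLt⟩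

/-- The function on `X` computed with oracle `D` and advice `α`. -/
def OracleProc.decode (P : OracleProc q (X × Λ) Q) (D : Q → Bool) (α : Λ) : X → Bool :=
  fun x => P.run D (x, α)

theorem OracleProc.card_queries_le (P : OracleProc q I Q) (D : Q → Bool) (w : I) :
    #(P.queries D w) ≤ q :=
  card_image_le.trans_eq (card_fin q)

theorem OracleProc.ans_congr (P : OracleProc q I Q) {D D' : Q → Bool} {w : I}
    (h : ∀ z ∈ P.queries D w, D' z = D z) (i : Fin q) : P.ans D' w i = P.ans D w i := by
  induction i using WellFoundedLT.induction with
  | ind i ih =>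
    rw [OracleProc.ans, OracleProc.ans, ← h _ (mem_image_of_mem _ (mem_univ i))]
    congr 2
    funext j
    exact ih ⟨j, _⟩ j.isLt

theorem OracleProc.run_congr (P : OracleProc q I Q) {D D' : Q → Bool} {w : I}
    (h : ∀ z ∈ P.queries D w, D' z = D z) : P.run D' w = P.run D w := by
  rw [OracleProc.run, OracleProc.run, funext (P.ans_congr h)]

theorem OracleProc.certificateComplexityLE_decode [Fintype X] (P : OracleProc q (X × Λ) Q) (α : Λ)
    (f : X → Bool) :
    CertificateComplexityLE {D | P.decode D α = f} (q * Fintype.card X) := by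
  intro D hD
  refine ⟨univ.biUnion fun x => P.queries D (x, α), ?_, fun D' hD' => ?_⟩
  · rw [mul_comm]
    exact card_biUnion_le_card_mul _ _ _ fun x _ => P.card_queries_le D (x, α)
  · rw [Set.mem_ofPred_eq] at hD ⊢
    rw [← hD]
    funext x
    exact P.run_congr fun z hz => hD' z (mem_biUnion.2 ⟨x, mem_univ x, hz⟩)

end OracleProcedures

section HardnessAmplification

variable {q : ℕ} {X Q Λ : Type*} [Fintype Q]

/-- `(Con, Red)` is a black-box `HF ⇒ ρ-HF` proof: whenever `D` agrees with `Con f` on a fraction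
`ρ` of the points, some advice in `Λ` makes `Red` compute `f` from `D`. -/
def IsBlackBoxHFProof (ρ : ℝ) (Con : (X → Bool) → Q → Bool) (Red : OracleProc q (X × Λ) Q) :
    Prop :=
  ∀ (f : X → Bool) (D : Q → Bool), uPr (fun z => D z = Con f z) ≥ ρ →
    ∃ α : Λ, ∀ x, Red.run D (x, α) = f x

variable {Con : (X → Bool) → Q → Bool} {Red : OracleProc q (X × Λ) Q} {p t : ℝ}

theorem one_sub_exp_le_sum_piMass_decode [Fintype Λ] [Nonempty Q]
    (hproof : IsBlackBoxHFProof (p - t) Con Red) (hp₀ : 0 < p) (hp₁ : p ≤ 1) (ht : 0 ≤ t)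
    (f : X → Bool) :
    1 - exp (-(Fintype.card Q * t ^ 2 / (2 * p))) ≤
      ∑ α, piMass (fun z => noisyBit p (Con f z)) {D | Red.decode D α = f} := by
  have hw (z : Q) := noisyBit_mem_stdSimplex hp₀.le hp₁ (Con f z)
  let far : Set (Q → Bool) := {D | uPr (fun z => D z = Con f z) ≤ p - t}
  have hdecode : farᶜ ⊆ ⋃ α, {D | Red.decode D α = f} := fun D hD => by
    have hclose : ¬uPr (fun z => D z = Con f z) ≤ p - t := hD
    obtain ⟨α, hα⟩ := hproof f D (not_le.1 hclose).le
    exact Set.mem_iUnion.2 ⟨α, funext hα⟩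
  calc 1 - exp (-(Fintype.card Q * t ^ 2 / (2 * p)))
    _ ≤ 1 - piMass (fun z => noisyBit p (Con f z)) far :=
        sub_le_sub_left (piMass_noisyBit_uPr_agree_le_exp hp₀ hp₁ ht (Con f)) 1
    _ = piMass (fun z => noisyBit p (Con f z)) farᶜ := (piMass_compl hw far).symm
    _ ≤ piMass (fun z => noisyBit p (Con f z)) (⋃ α, {D | Red.decode D α = f}) :=
        piMass_mono hw hdecode
    _ ≤ ∑ α, piMass (fun z => noisyBit p (Con f z)) {D | Red.decode D α = f} :=
        piMass_iUnion_le hw _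

variable [Fintype X]

theorem sum_piMass_decode_eq_one {w : Q → Bool → ℝ} (hw : ∀ z, w z ∈ stdSimplex ℝ Bool) (α : Λ) :
    ∑ f, piMass w {D | Red.decode D α = f} = 1 := by
  simp only [piMass]
  rw [sum_comm, ← sum_prod_weight_eq_one hw]
  refine sum_congr rfl fun D _ => ?_
  simp [Set.indicator_apply]

theorem piMass_noisyBit_decode_le (hp : 1 / 2 ≤ p) (hp₁ : p ≤ 1) (c : Q → Bool) (f : X → Bool)
    (α : Λ) :
    piMass (fun z => noisyBit p (c z)) {D | Red.decode D α = f} ≤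
      (2 * p) ^ (q * Fintype.card X) * piMass (fun _ _ => 1 / 2) {D | Red.decode D α = f} := by
  refine (Red.certificateComplexityLE_decode α f).piMass_le
    (fun z => noisyBit_mem_stdSimplex (by linarith) hp₁ (c z))
    (fun _ => const_half_mem_stdSimplex) (by linarith) fun z b => ?_
  linarith [noisyBit_le hp (c z) b]

theorem IsBlackBoxHFProof.two_pow_mul_le [Fintype Λ] [Nonempty Q]
    (hproof : IsBlackBoxHFProof (p - t) Con Red) (hp : 1 / 2 ≤ p) (hp₁ : p ≤ 1) (ht : 0 ≤ t) :
    2 ^ Fintype.card X * (1 - exp (-(Fintype.card Q * t ^ 2 / (2 * p)))) ≤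
      (2 * p) ^ (q * Fintype.card X) * Fintype.card Λ := by
  calc 2 ^ Fintype.card X * (1 - exp (-(Fintype.card Q * t ^ 2 / (2 * p))))
    _ = ∑ _f : X → Bool, (1 - exp (-(Fintype.card Q * t ^ 2 / (2 * p)))) := by
        simp [mul_sub]
    _ ≤ ∑ f, ∑ α, piMass (fun z => noisyBit p (Con f z)) {D | Red.decode D α = f} :=
        sum_le_sum fun f _ => one_sub_exp_le_sum_piMass_decode hproof (by linarith) hp₁ ht f
    _ ≤ ∑ f, ∑ α, (2 * p) ^ (q * Fintype.card X) *
          piMass (fun _ _ => 1 / 2) {D | Red.decode D α = f} :=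
        sum_le_sum fun f _ => sum_le_sum fun α _ => piMass_noisyBit_decode_le hp hp₁ (Con f) f α
    _ = (2 * p) ^ (q * Fintype.card X) * Fintype.card Λ := by
        rw [sum_comm]
        simp only [← mul_sum, sum_piMass_decode_eq_one fun _ => const_half_mem_stdSimplex]
        simp

end HardnessAmplification

section Parameters

theorem one_div_twenty_le_mul_of_pow_le {N q : ℕ} (hN : 1 ≤ N) {ε : ℝ} (hε : 0 < ε)
    (h : 2 ^ N * (3 / 4) ≤ (1 + 4 * ε) ^ (q * N) * 2 ^ ((N : ℝ) / 10)) : 1 / 20 ≤ q * ε := by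
  have hlog := log_le_log (by positivity) h
  rw [log_mul (by positivity) (by positivity), log_mul (by positivity) (by positivity), log_pow,
    log_pow, log_rpow two_pos] at hlog
  push_cast at hlog
  have hlog_base : q * N * log (1 + 4 * ε) ≤ q * N * (4 * ε) := by
    gcongr
    linarith [log_le_sub_one_of_pos (show 0 < 1 + 4 * ε by positivity)]
  have hlog_const : -(1 / 3) ≤ log (3 / 4) :=
    le_trans (by norm_num) (one_sub_inv_le_log_of_pos (by norm_num))
  have hN' : (1 : ℝ) ≤ N := mod_cast hN
  nlinarith [log_two_gt_d9]

theorem four_div_sq_le_two_pow {ε : ℝ} (hε : 0 < ε) {n : ℕ} (h : logb 2 (1 / ε ^ 2) + 2 ≤ n) :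
    4 / ε ^ 2 ≤ 2 ^ n := by
  have hlogb : logb 2 (4 / ε ^ 2) = logb 2 (1 / ε ^ 2) + 2 := by
    rw [show 4 / ε ^ 2 = 1 / ε ^ 2 * 2 ^ (2 : ℝ) by norm_num; ring,
      logb_mul (by positivity) (by positivity), logb_rpow two_pos (by norm_num)]
  rw [← hlogb, logb_le_iff_le_rpow one_lt_two (by positivity)] at h
  exact_mod_cast h

end Parameters

theorem hardness_amplification_query_lower_bound_eps_general {X Q Λ : Type*} [Fintype X]
    [Nonempty X] [Fintype Q] [Fintype Λ] {q : ℕ} {ε : ℝ} {Con : (X → Bool) → Q → Bool}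
    {Red : OracleProc q (X × Λ) Q} (hproof : IsBlackBoxHFProof (1 / 2 + ε) Con Red)
    (hε₀ : 0 < ε) (hε₁ : ε ≤ 1 / 10) (hΛ : (Fintype.card Λ : ℝ) ≤ 2 ^ ((Fintype.card X : ℝ) / 10))
    (hQ : 4 / ε ^ 2 ≤ Fintype.card Q) : 1 / 20 * (1 / ε) ≤ q := by
  have : Nonempty Q := Fintype.card_pos_iff.1 (mod_cast (by positivity : 0 < 4 / ε ^ 2).trans_le hQ)
  rw [show 1 / 2 + ε = 1 / 2 + 2 * ε - ε by ring] at hproof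
  have hcount := hproof.two_pow_mul_le (by linarith) (by linarith) hε₀.le
  have htail : exp (-(Fintype.card Q * ε ^ 2 / (2 * (1 / 2 + 2 * ε)))) ≤ 1 / 4 := by
    have htwo : 2 ≤ Fintype.card Q * ε ^ 2 / (2 * (1 / 2 + 2 * ε)) := by
      rw [le_div_iff₀ (by positivity)]
      linarith [(div_le_iff₀ (by positivity)).1 hQ]
    have hfour : (4 : ℝ) ≤ exp 2 := by linarith [quadratic_le_exp_of_nonneg (x := 2) two_pos.le]
    rw [exp_neg, ← one_div]
    exact one_div_le_one_div_of_le four_pos (hfour.trans (exp_le_exp.2 htwo))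
  rw [mul_one_div, div_le_iff₀ hε₀]
  refine one_div_twenty_le_mul_of_pow_le (Fintype.card_pos (α := X)) hε₀ ?_
  calc 2 ^ Fintype.card X * (3 / 4)
    _ ≤ (2 * (1 / 2 + 2 * ε)) ^ (q * Fintype.card X) * Fintype.card Λ :=
        (mul_le_mul_of_nonneg_left (by linarith) (by positivity)).trans hcount
    _ ≤ (1 + 4 * ε) ^ (q * Fintype.card X) * 2 ^ ((Fintype.card X : ℝ) / 10) := by
        rw [show 2 * (1 / 2 + 2 * ε) = 1 + 4 * ε by ring]
        gcongr

end

/-- Theorem 4.1: lower bound of `Ω(1/ε)` on the number of queries in black-box hardness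
amplification, applicable at the extreme high-end. -/
theorem hardness_amplification_query_lower_bound_eps :
    ∃ c₁ c₃ : ℝ, c₁ > 0 ∧ c₃ > 0 ∧
      ∀ (ℓ ℓ' a q : ℕ) (ε : ℝ)
        (Con : ((Fin ℓ → Bool) → Bool) → (Fin ℓ' → Bool) → Bool)
        (Red : OracleProc q ((Fin ℓ → Bool) × (Fin a → Bool)) (Fin ℓ' → Bool)),
        -- (Con, Red) is a black-box HF ⇒ (1/2+ε)-HF proof:
        (∀ (f : (Fin ℓ → Bool) → Bool) (D : (Fin ℓ' → Bool) → Bool),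
            uPr (fun x : Fin ℓ' → Bool => D x = Con f x) ≥ 1 / 2 + ε →
            ∃ α : Fin a → Bool, ∀ x : Fin ℓ → Bool, OracleProc.run Red D (x, α) = f x) →
        0 < ε → ε ≤ 1 / 10 →
        (a : ℝ) ≤ 2 ^ ℓ / 10 →
        (ℓ' : ℝ) ≥ Real.logb 2 (1 / ε ^ 2) + c₃ →
        (q : ℝ) ≥ c₁ * (1 / ε) := by
  refine ⟨1 / 20, 2, by norm_num, by norm_num, ?_⟩
  intro ℓ ℓ' a q ε Con Red hproof hε₀ hε₁ ha hℓ'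
  refine hardness_amplification_query_lower_bound_eps_general hproof hε₀ hε₁ ?_ ?_
  · simpa [← Real.rpow_natCast] using ha
  · simpa using four_div_sq_le_two_pow hε₀ hℓ'
end

section
/- There exist constants c > 0 and ℓ₀ such that the following holds for all ℓ ≥ ℓ₀ and all parameters r, m, a, j with m ≥ 2r, m ≤ 2^ℓ, j > 4, and a + j·ℓ ≤ min(j·(m − r) − c, 2^ℓ/2). When E : {0,1}^{2^ℓ} × {0,1}^r → {0,1}^m is chosen uniformly at random among all such functions, the probability that there exist j distinct strings z_1,…,z_j ∈ {0,1}^m with Pr_{F uniform in Func_{ℓ,1}}[for every i ∈ {1,…,j} there exists y ∈ {0,1}^r with Con^E_F(y) = z_i] ≥ 2^{−(a + j·ℓ)} is smaller than 2^{−2^{2^ℓ/2}}. -/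
open scoped BigOperators

attribute [local instance] Classical.propDecidable

/-!
Fix targets `z` and write `n = 2 ^ 2 ^ ℓ` for the number of functions `F`. A uniformly random
`e : Y → Z` hits all of `z` with probability at most `p = (|Y| / |Z|) ^ j`, and the values `E F`
are independent, so the number of `F` for which `E F` hits all of `z` has mean at most `n * p`.
The hypothesis, with `c = 4`, makes the threshold `k = n * 2 ^ (-(a + j * ℓ))` at least
`16 * n * p ≥ 4 * exp 1 * n * p`, so by a Chernoff bound this number reaches `k` with probability at
most `4 ^ (-k)`. This absorbs the union bound over the at most `2 ^ (m * j)` choices of `z`,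
because `m * j < 2 ^ (2 ^ ℓ / 2) ≤ k`.
-/

section UniformProbability

variable {X : Type*} [Fintype X]

theorem expect_ite_eq_uPr (P : X → Prop) [DecidablePred P] :
    𝔼 x, (if P x then (1 : ℝ) else 0) = uPr P := by
  rw [Fintype.expect_eq_sum_div_card, Finset.sum_boole, uPr, ← Fintype.card_subtype]
  congr!

theorem card_mul_uPr [Nonempty X] (P : X → Prop) :
    Fintype.card X * uPr P = (Fintype.card {x // P x} : ℝ) :=
  mul_div_cancel₀ _ (Nat.cast_ne_zero.2 Fintype.card_ne_zero)

theorem prod_ite_eq_rpow_uPr [Nonempty X] (G : X → Prop) (t : ℝ) :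
    ∏ x, (if G x then t else 1) = t ^ (Fintype.card X * uPr G) := by
  rw [card_mul_uPr, Real.rpow_natCast, Finset.prod_ite, Finset.prod_const, Finset.prod_const_one,
    mul_one, Fintype.card_subtype]

theorem uPr_mono {P Q : X → Prop} (h : ∀ x, P x → Q x) : uPr P ≤ uPr Q := by
  unfold uPr
  gcongr
  exact Fintype.card_subtype_mono _ _ h

theorem uPr_exists_le_sum {I : Type*} [Fintype I] (P : I → X → Prop) :
    uPr (fun x => ∃ i, P i x) ≤ ∑ i, uPr (P i) := by
  simp only [← expect_ite_eq_uPr]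
  rw [← Finset.expect_sum_comm]
  refine Finset.expect_le_expect fun x _ => ?_
  have hnonneg (i : I) : 0 ≤ if P i x then (1 : ℝ) else 0 := by positivity
  split_ifs with hx
  · obtain ⟨i, hi⟩ := hx
    simpa only [if_pos hi] using
      Finset.single_le_sum (fun i _ => hnonneg i) (Finset.mem_univ i)
  · exact Finset.sum_nonneg fun i _ => hnonneg i

theorem uPr_le_expect_div {f : X → ℝ} (hf : ∀ x, 0 ≤ f x) {k : ℝ} (hk : 0 < k) :
    uPr (fun x => k ≤ f x) ≤ (𝔼 x, f x) / k := by
  rw [← expect_ite_eq_uPr, Finset.expect_div]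
  refine Finset.expect_le_expect fun x _ => ?_
  split_ifs with hx
  · exact (one_le_div hk).2 hx
  · exact div_nonneg (hf x) hk.le

end UniformProbability

section Chernoff

variable {X W : Type*} [Fintype X] [DecidableEq X] [Fintype W]

theorem expect_prod_apply (g : W → ℝ) :
    𝔼 E : X → W, ∏ x, g (E x) = (𝔼 w, g w) ^ Fintype.card X := by
  simp only [Fintype.expect_eq_sum_div_card, Fintype.card_fun, Nat.cast_pow, div_pow,
    ← Fintype.prod_sum (fun (_ : X) w => g w), Finset.prod_const, Finset.card_univ]

variable [Nonempty W]

theorem expect_ite_le_exp (G : W → Prop) (t : ℝ) :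
    𝔼 w, (if G w then t else 1) ≤ Real.exp (uPr G * (t - 1)) :=
  calc 𝔼 w, (if G w then t else 1)
      = 𝔼 w, ((if G w then (1 : ℝ) else 0) * (t - 1) + 1) :=
        Finset.expect_congr rfl fun w _ => by split_ifs <;> ring
    _ = uPr G * (t - 1) + 1 := by
        rw [Finset.expect_add_distrib, ← Finset.expect_mul, expect_ite_eq_uPr,
          Fintype.expect_const]
    _ ≤ _ := Real.add_one_le_exp _

variable [Nonempty X]

theorem uPr_le_uPr_apply_le_exp (G : W → Prop) {t : ℝ} (ht : 1 ≤ t) (δ : ℝ) :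
    uPr (fun E : X → W => δ ≤ uPr fun x => G (E x)) ≤
      Real.exp (Fintype.card X * (uPr G * (t - 1))) / t ^ (Fintype.card X * δ) := by
  have : 0 < t := one_pos.trans_le ht
  have hite (w : W) : 0 ≤ if G w then t else 1 := by positivity
  calc uPr (fun E : X → W => δ ≤ uPr fun x => G (E x))
      ≤ uPr (fun E : X → W => t ^ (Fintype.card X * δ) ≤ ∏ x, if G (E x) then t else 1) := by
        refine uPr_mono fun E hE => ?_
        rw [prod_ite_eq_rpow_uPr fun x => G (E x)]
        gcongr
    _ ≤ (𝔼 E : X → W, ∏ x, if G (E x) then t else 1) / t ^ (Fintype.card X * δ) :=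
        uPr_le_expect_div (fun E => Finset.prod_nonneg fun x _ => hite (E x)) (by positivity)
    _ ≤ _ := by
        rw [expect_prod_apply fun w => if G w then t else 1, Real.exp_nat_mul]
        gcongr
        exact expect_ite_le_exp G t

theorem uPr_le_uPr_apply_le_rpow (G : W → Prop) {t δ : ℝ} (ht : 1 ≤ t)
    (hδ : Real.exp 1 * t * uPr G ≤ δ) :
    uPr (fun E : X → W => δ ≤ uPr fun x => G (E x)) ≤ t ^ (-(Fintype.card X * δ)) := by
  have ht0 : 0 < t := one_pos.trans_le ht
  have het : 1 ≤ Real.exp 1 * t := one_le_mul_of_one_le_of_one_le (Real.one_le_exp zero_le_one) ht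
  have hG : 0 ≤ uPr G := by unfold uPr; positivity
  calc _ ≤ Real.exp (Fintype.card X * (uPr G * (Real.exp 1 * t - 1))) /
          (Real.exp 1 * t) ^ (Fintype.card X * δ) := uPr_le_uPr_apply_le_exp G het δ
    _ ≤ Real.exp (Fintype.card X * δ) / (Real.exp 1 * t) ^ (Fintype.card X * δ) := by
        gcongr
        linarith
    _ = t ^ (-(Fintype.card X * δ)) := by
        rw [Real.mul_rpow (Real.exp_pos 1).le ht0.le, Real.exp_one_rpow, Real.rpow_neg ht0.le]
        field_simp

end Chernoff

section Hitting

variable {J Y Z : Type*}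

/-- Every target string `z i` is a value of `e`. For `e = Con^E_F`, written `E F` as `E` is curried,
this is the event whose probability over `F` the theorem bounds. -/
def HitsAll (z : J → Z) (e : Y → Z) : Prop := ∀ i, ∃ y, e y = z i

theorem HitsAll.exists_embedding {z : J ↪ Z} {e : Y → Z} (he : HitsAll z e) :
    ∃ y : J ↪ Y, e ∘ y = z := by
  choose y hy using he
  have hyz : e ∘ y = z := funext hy
  exact ⟨⟨y, Function.Injective.of_comp (hyz ▸ z.injective)⟩, hyz⟩

theorem card_comp_eq_mul_pow [Finite J] (y : J ↪ Y) (z : J → Z) :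
    Nat.card {e : Y → Z // e ∘ y = z} * Nat.card Z ^ Nat.card J = Nat.card (Y → Z) := by
  rw [← Nat.card_fun, ← Nat.card_prod]
  refine Nat.card_congr
    { toFun p := Function.extend y p.2 p.1
      invFun f := (⟨Function.extend y z f, Function.extend_comp y.injective z f⟩, f ∘ y)
      left_inv := ?_
      right_inv := ?_ }
  · rintro ⟨⟨e, rfl⟩, w⟩
    ext v
    · by_cases hv : ∃ i, y i = v
      · obtain ⟨i, rfl⟩ := hv
        simp [y.injective.extend_apply]
      · simp [Function.extend_apply' _ _ _ hv]
    · simp [y.injective.extend_apply]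
  · intro f
    ext v
    by_cases hv : ∃ i, y i = v
    · obtain ⟨i, rfl⟩ := hv
      simp [y.injective.extend_apply]
    · simp [Function.extend_apply' _ _ _ hv]

variable [Fintype J] [Fintype Y]

theorem card_embedding_le_pow : Fintype.card (J ↪ Y) ≤ Fintype.card Y ^ Fintype.card J := by
  rw [Fintype.card_embedding_eq]
  exact Nat.descFactorial_le_pow _ _

variable [DecidableEq Y] [Fintype Z] [Nonempty Z]

theorem uPr_comp_eq (y : J ↪ Y) (z : J → Z) :
    uPr (fun e : Y → Z => e ∘ y = z) = ((Fintype.card Z : ℝ) ^ Fintype.card J)⁻¹ := by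
  have : Nonempty {e : Y → Z // e ∘ y = z} :=
    ⟨⟨Function.extend y z (Function.const _ (Classical.arbitrary Z)),
      Function.extend_comp y.injective _ _⟩⟩
  simp only [uPr, Fintype.card_eq_nat_card]
  rw [← card_comp_eq_mul_pow y z, Nat.cast_mul, Nat.cast_pow,
    div_mul_cancel_left₀ (Nat.cast_ne_zero.2 Nat.card_pos.ne')]

theorem uPr_hitsAll_le (z : J ↪ Z) :
    uPr (fun e : Y → Z => HitsAll z e) ≤
      ((Fintype.card Y : ℝ) / Fintype.card Z) ^ Fintype.card J :=
  calc uPr (fun e : Y → Z => HitsAll z e)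
      ≤ uPr (fun e : Y → Z => ∃ y : J ↪ Y, e ∘ y = z) := uPr_mono fun _ => HitsAll.exists_embedding
    _ ≤ ∑ y : J ↪ Y, uPr (fun e : Y → Z => e ∘ y = z) := uPr_exists_le_sum _
    _ = Fintype.card (J ↪ Y) * ((Fintype.card Z : ℝ) ^ Fintype.card J)⁻¹ := by
        simp only [uPr_comp_eq, Finset.sum_const, Finset.card_univ, nsmul_eq_mul]
    _ ≤ _ := by
        rw [div_pow, div_eq_mul_inv]
        gcongr
        exact_mod_cast card_embedding_le_pow

theorem uPr_exists_hitsAll_le {X : Type*} [Fintype X] [DecidableEq X] [Nonempty X] {t δ : ℝ}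
    (ht : 1 ≤ t)
    (hδ : Real.exp 1 * t * ((Fintype.card Y : ℝ) / Fintype.card Z) ^ Fintype.card J ≤ δ) :
    uPr (fun E : X → Y → Z => ∃ z : J ↪ Z, δ ≤ uPr fun F => HitsAll z (E F)) ≤
      (Fintype.card Z : ℝ) ^ Fintype.card J * t ^ (-(Fintype.card X * δ)) := by
  have hfixed (z : J ↪ Z) : uPr (fun E : X → Y → Z => δ ≤ uPr fun F => HitsAll z (E F)) ≤
      t ^ (-(Fintype.card X * δ)) := by
    refine uPr_le_uPr_apply_le_rpow (HitsAll z) ht (hδ.trans' ?_)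
    gcongr
    exact uPr_hitsAll_le z
  calc _ ≤ ∑ z : J ↪ Z, uPr (fun E : X → Y → Z => δ ≤ uPr fun F => HitsAll z (E F)) :=
        uPr_exists_le_sum _
    _ ≤ Fintype.card (J ↪ Z) * t ^ (-(Fintype.card X * δ)) := by
        rw [← nsmul_eq_mul, ← Finset.card_univ]
        exact Finset.sum_le_card_nsmul _ _ _ fun z _ => hfixed z
    _ ≤ _ := by
        gcongr
        exact_mod_cast card_embedding_le_pow

end Hitting

section Parameters

theorem four_mul_le_two_pow {n : ℕ} (hn : 4 ≤ n) : 4 * n ≤ 2 ^ n := by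
  induction n, hn using Nat.le_induction with
  | base => norm_num
  | succ n hn ih => rw [pow_succ]; omega

theorem lt_two_pow_of_add_mul_le {ℓ j : ℕ} {a : ℝ} (hℓ : 1 ≤ ℓ) (ha : 0 ≤ a)
    (h : a + j * ℓ ≤ 2 ^ ℓ / 2) : j < 2 ^ ℓ := by
  have hmul : (j : ℝ) ≤ j * ℓ := le_mul_of_one_le_right j.cast_nonneg (by exact_mod_cast hℓ)
  have hpow : (0 : ℝ) < 2 ^ ℓ := by positivity
  exact_mod_cast (by linarith : (j : ℝ) < 2 ^ ℓ)

theorem mul_lt_two_rpow_two_pow_div_two {ℓ m j : ℕ} (hℓ : 4 ≤ ℓ) (hm : m ≤ 2 ^ ℓ)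
    (hj : j < 2 ^ ℓ) : (m * j : ℝ) < 2 ^ ((2 : ℝ) ^ ℓ / 2) := by
  have hexp : (4 * ℓ : ℝ) ≤ 2 ^ ℓ := by exact_mod_cast four_mul_le_two_pow hℓ
  calc (m * j : ℝ) < 2 ^ ℓ * 2 ^ ℓ := by
        exact_mod_cast mul_lt_mul' hm hj (Nat.zero_le j) (by positivity)
    _ = (2 : ℝ) ^ (2 * ℓ : ℝ) := by
        rw [← pow_add, ← two_mul, ← Real.rpow_natCast, Nat.cast_mul, Nat.cast_ofNat]
    _ ≤ 2 ^ ((2 : ℝ) ^ ℓ / 2) := Real.rpow_le_rpow_of_exponent_le one_le_two (by linarith)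

theorem exp_one_mul_four_mul_pow_le_two_rpow_neg {r m j : ℕ} {s : ℝ}
    (hs : s ≤ j * ((m : ℝ) - r) - 4) :
    Real.exp 1 * 4 * ((2 : ℝ) ^ r / 2 ^ m) ^ j ≤ 2 ^ (-s) := by
  have hratio : ((2 : ℝ) ^ r / 2 ^ m) ^ j = 2 ^ (-(j * ((m : ℝ) - r))) := by
    rw [← Real.rpow_natCast 2 r, ← Real.rpow_natCast 2 m, ← Real.rpow_sub two_pos,
      ← Real.rpow_mul_natCast two_pos.le]
    congr 1
    ring
  have hconst : Real.exp 1 * 4 ≤ 2 ^ (4 : ℝ) := by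
    norm_num
    linarith [Real.exp_one_lt_three]
  calc Real.exp 1 * 4 * ((2 : ℝ) ^ r / 2 ^ m) ^ j
      ≤ 2 ^ (4 : ℝ) * 2 ^ (-(j * ((m : ℝ) - r))) := by
        rw [hratio]
        gcongr
    _ = 2 ^ (4 - j * ((m : ℝ) - r)) := by rw [← Real.rpow_add two_pos, ← sub_eq_add_neg]
    _ ≤ 2 ^ (-s) := Real.rpow_le_rpow_of_exponent_le one_le_two (by linarith)

theorem pow_mul_four_rpow_neg_lt {m j : ℕ} {T k : ℝ} (hT : (m * j : ℝ) < T) (hk : T ≤ k) :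
    ((2 : ℝ) ^ m) ^ j * 4 ^ (-k) < 2 ^ (-T) := by
  have hfour : (4 : ℝ) ^ (-k) = 2 ^ (2 * -k) := by
    rw [Real.rpow_mul two_pos.le]
    norm_num
  rw [hfour, ← pow_mul, ← Real.rpow_natCast, ← Real.rpow_add two_pos, Nat.cast_mul]
  exact Real.rpow_lt_rpow_of_exponent_lt one_lt_two (by linarith)

theorem two_rpow_half_le_mul_two_rpow_neg {n : ℕ} {s : ℝ} (hs : s ≤ n / 2) :
    (2 : ℝ) ^ (n / 2 : ℝ) ≤ 2 ^ n * 2 ^ (-s) := by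
  rw [← Real.rpow_natCast 2 n, ← Real.rpow_add two_pos]
  exact Real.rpow_le_rpow_of_exponent_le one_le_two (by linarith)

end Parameters

theorem random_construction_has_no_cheap_fixing_general :
    ∃ (c : ℝ) (ℓ₀ : ℕ), c > 0 ∧
      ∀ (ℓ r m j : ℕ) (a : ℝ), ℓ ≥ ℓ₀ → m ≤ 2 ^ ℓ → 0 ≤ a →
        a + (j : ℝ) * (ℓ : ℝ) ≤ min ((j : ℝ) * ((m : ℝ) - (r : ℝ)) - c) (2 ^ ℓ / 2) →
        uPr (fun E : ((Fin ℓ → Bool) → Bool) → (Fin r → Bool) → (Fin m → Bool) =>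
            ∃ z : Fin j → (Fin m → Bool), Function.Injective z ∧
              uPr (fun F : (Fin ℓ → Bool) → Bool =>
                  ∀ i : Fin j, ∃ y : Fin r → Bool, E F y = z i) ≥
                (2 : ℝ) ^ (-(a + (j : ℝ) * (ℓ : ℝ)))) <
          (2 : ℝ) ^ (-(2 : ℝ) ^ ((2 : ℝ) ^ (ℓ : ℕ) / 2)) := by
  refine ⟨4, 4, four_pos, fun ℓ r m j a hℓ hm ha hs => ?_⟩
  obtain ⟨hrate, hhalf⟩ := le_min_iff.1 hs
  have hj : j < 2 ^ ℓ := lt_two_pow_of_add_mul_le (by omega) ha hhalf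
  have hunion := uPr_exists_hitsAll_le (X := (Fin ℓ → Bool) → Bool) (J := Fin j)
    (Y := Fin r → Bool) (Z := Fin m → Bool) (t := 4) (δ := 2 ^ (-(a + j * ℓ))) (by norm_num)
    (by simpa using exp_one_mul_four_mul_pow_le_two_rpow_neg hrate)
  have hthreshold : (2 : ℝ) ^ ((2 : ℝ) ^ ℓ / 2) ≤ 2 ^ 2 ^ ℓ * 2 ^ (-(a + j * ℓ)) := by
    exact_mod_cast two_rpow_half_le_mul_two_rpow_neg (n := 2 ^ ℓ) (by exact_mod_cast hhalf)
  have hsmall := pow_mul_four_rpow_neg_lt (mul_lt_two_rpow_two_pow_div_two hℓ hm hj) hthreshold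
  calc _ ≤ _ := uPr_mono fun E ⟨z, hz, hE⟩ => ⟨⟨z, hz⟩, hE⟩
    _ ≤ _ := hunion
    _ < _ := by simpa using hsmall

/-- Theorem 3.5 (first item): for a uniformly random construction map `E`, it is extremely
unlikely that `j` outputs can be fixed at information cost `a + j·ℓ`. -/
theorem random_construction_has_no_cheap_fixing :
    ∃ (c : ℝ) (ℓ₀ : ℕ), c > 0 ∧
      ∀ (ℓ r m a j : ℕ), ℓ ≥ ℓ₀ → m ≥ 2 * r → m ≤ 2 ^ ℓ → j > 4 →
        (a : ℝ) + (j : ℝ) * (ℓ : ℝ) ≤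
            min ((j : ℝ) * ((m : ℝ) - (r : ℝ)) - c) (2 ^ ℓ / 2) →
        uPr (fun E : ((Fin ℓ → Bool) → Bool) → (Fin r → Bool) → (Fin m → Bool) =>
            ∃ z : Fin j → (Fin m → Bool), Function.Injective z ∧
              uPr (fun F : (Fin ℓ → Bool) → Bool =>
                  ∀ i : Fin j, ∃ y : Fin r → Bool, E F y = z i) ≥
                (2 : ℝ) ^ (-((a : ℝ) + (j : ℝ) * (ℓ : ℝ)))) <
          (2 : ℝ) ^ (-(2 : ℝ) ^ ((2 : ℝ) ^ (ℓ : ℕ) / 2)) := by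
  obtain ⟨c, ℓ₀, hc, hgeneral⟩ := random_construction_has_no_cheap_fixing_general
  exact ⟨c, ℓ₀, hc, fun ℓ r m a j hℓ _ hm _ => hgeneral ℓ r m j a hℓ hm a.cast_nonneg⟩
end
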